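/- For every positive integer u with u ≡ 2 or 3 (mod 4) and u ≥ 7, setting v = 12u+1, one has J_3[v] = I_3[v]. -/

import Mathlib

/-!
The inclusion `J₃[v] ⊆ I₃[v]`: if three designs have exactly the blocks of a set `C` in common
pairwise, then removing `C` leaves three disjoint sets of blocks covering the same pairs. Such a
trade is empty or has at least eight blocks (`IsTrade.eight_le`). Every point of it lies in at
least two blocks. If all points of some block lie in three blocks, there are at least
`1 + 4 · 2` blocks. If a point lies in just two blocks, then the two other sets split its six
neighbours differently into two triples, which forces six further blocks.

The inclusion `I₃[v] ⊆ J₃[v]`, shown for all `v = 12 u + 1` with `u ≥ 4`, `u ≠ 6` (`Good_all`), is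
by Wilson's construction. It is convenient to speak of three decompositions of any graph into
copies of `K₄`; the set `Spec G` of the possible numbers of common blocks contains the sum of the
sets `Spec Gᵢ` whenever `G` is an edge-disjoint union of graphs `Gᵢ`. The complete graph on
`n |U| + 1` vertices is such a union, given a design on `U` with groups and blocks: take the
`n`-fold blow-ups of the blocks, and the complete graphs on the `n`-fold blow-ups of the groups
with one common further vertex (`blowUp_sum`, `fill_groups`).

With `n = 4`, explicit designs with groups of size 3, block size 4, and possibly one group of
size 6 settle thirteen small values of `u`. The ingredients are triples of `S(2,4,13)` designs with
0, 1, 2, 3, 4, 5 or 13 common blocks, and triples of transversal designs with four groups of size 4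
having 0, 1, 2 or 16 common blocks; all numbers required are sums of these. With `n = 12`, a
transversal design with five groups of size `m`, one of them truncated to size `w`, leads from `m`
and `w` to `4 m + w` (`Good_td`); only the extreme numbers of common blocks are needed for `w`.

The explicit designs are verified by evaluating a Boolean function on lists of numbers (`check`),
which records the pairs covered in the bits of a natural number.
-/

/-- The number of blocks of an `S(2,4,v)` design: `b_v = v(v-1)/12`. -/
def steinerBlockCount (v : ℕ) : ℕ := v * (v - 1) / 12

/-- `B` is the block set of a Steiner system `S(2,4,·)` on the point set `V`:
every block is a 4-element subset of `V` and every pair of distinct points of `V`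
lies in exactly one block. -/
def IsS24 {α : Type} [DecidableEq α] (V : Finset α) (B : Finset (Finset α)) : Prop :=
  (∀ b ∈ B, b ⊆ V ∧ b.card = 4) ∧
  ∀ x y : α, x ∈ V → y ∈ V → x ≠ y → ∃! b, b ∈ B ∧ x ∈ b ∧ y ∈ b

/-- Three block sets have pairwise-coincident intersections. -/
def CoincidentInts {α : Type} [DecidableEq α] (B1 B2 B3 : Finset (Finset α)) : Prop :=
  B1 ∩ B2 = B1 ∩ B3 ∧ B1 ∩ B2 = B2 ∩ B3

/-- `J_3[v]`: the set of `k` such that there exist three `S(2,4,v)` designs on a common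
`v`-element point set whose pairwise intersections coincide and have cardinality `k`. -/
def J3 (v : ℕ) : Set ℕ :=
  {k | ∃ B1 B2 B3 : Finset (Finset (Fin v)),
    IsS24 Finset.univ B1 ∧ IsS24 Finset.univ B2 ∧ IsS24 Finset.univ B3 ∧
    CoincidentInts B1 B2 B3 ∧ (B1 ∩ B2 ∩ B3).card = k}

/-- `I_3[v] = {0,1,...,b_v} \ {b_v-7, ..., b_v-1}`. -/
def I3 (v : ℕ) : Set ℕ :=
  {k | k ≤ steinerBlockCount v} \
    {steinerBlockCount v - 7, steinerBlockCount v - 6, steinerBlockCount v - 5,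
     steinerBlockCount v - 4, steinerBlockCount v - 3, steinerBlockCount v - 2,
     steinerBlockCount v - 1}

open scoped Pointwise

/-! ### Decompositions of graphs and the spectrum of common blocks -/

/-- The sets in `B` are cliques of `G` and every edge of `G` lies in exactly one of them. -/
structure IsDecomp {α : Type} (G : SimpleGraph α) (B : Finset (Finset α)) : Prop where
  adj : ∀ b ∈ B, ∀ x ∈ b, ∀ y ∈ b, x ≠ y → G.Adj x y
  uniq : ∀ x y, G.Adj x y → ∃! b, b ∈ B ∧ x ∈ b ∧ y ∈ b

/-- A decomposition into cliques of size 4. -/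
structure IsDec {α : Type} (G : SimpleGraph α) (B : Finset (Finset α)) : Prop
    extends IsDecomp G B where
  card : ∀ b ∈ B, b.card = 4

/-- The numbers of common blocks of three `K₄`-decompositions of `G` any two of which have the
same blocks (the members of `C`) in common. -/
def Spec {α : Type} (G : SimpleGraph α) : Set ℕ :=
  {k | ∃ (B : Fin 3 → Finset (Finset α)) (C : Finset (Finset α)), (∀ i, IsDec G (B i)) ∧
    (∀ i j, i ≠ j → ∀ b, (b ∈ B i ∧ b ∈ B j) ↔ b ∈ C) ∧ C.card = k}

/-- The spectrum of the complete graph on `v` points, i.e. of `S(2,4,v)` designs. -/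
def J (v : ℕ) : Set ℕ := Spec (⊤ : SimpleGraph (Fin v))

/-- The `n`-fold blow-up of `G`: each vertex is replaced by `n` independent vertices. -/
abbrev blowUp {α : Type} (G : SimpleGraph α) (n : ℕ) : SimpleGraph (α × Fin n) :=
  G.comap Prod.fst

/-- The spectrum of the complete `k`-partite graph with parts of size `n`. -/
def M (k n : ℕ) : Set ℕ := Spec (blowUp (⊤ : SimpleGraph (Fin k)) n)

theorem IsDec.card_mem {α : Type} {G : SimpleGraph α} {B : Finset (Finset α)}
    (h : IsDec G B) : B.card ∈ Spec G :=
  ⟨fun _ => B, B, fun _ => h, fun _ _ _ _ => and_self_iff, rfl⟩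

theorem IsDec.exists_adj {α : Type} {G : SimpleGraph α} {B : Finset (Finset α)}
    (h : IsDec G B) {b : Finset α} (hb : b ∈ B) : ∃ x ∈ b, ∃ y ∈ b, G.Adj x y := by
  have h4 := h.card b hb
  obtain ⟨x, hx, y, hy, hxy⟩ := Finset.one_lt_card.1 (show 1 < b.card by omega)
  exact ⟨x, hx, y, hy, h.adj b hb x hx y hy hxy⟩

/-- Spectra add up along edge-disjoint unions: decompositions of the parts are put together, and
a block of one part is never a block of another one because it contains an edge. -/
theorem Spec_sum {α ι : Type} (G : SimpleGraph α) (H : ι → SimpleGraph α)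
    (s : Finset ι) (hG : ∀ x y, G.Adj x y ↔ ∃ i ∈ s, (H i).Adj x y)
    (hd : ∀ i ∈ s, ∀ j ∈ s, ∀ x y, (H i).Adj x y → (H j).Adj x y → i = j) :
    ∑ i ∈ s, Spec (H i) ⊆ Spec G := by
  classical
  intro k hk
  obtain ⟨g, hg, rfl⟩ := (Set.mem_finsetSum _ _ _).1 hk
  have hg' : ∀ i : ι, ∃ (B : Fin 3 → Finset (Finset α)) (C : Finset (Finset α)), i ∈ s →
      (∀ t, IsDec (H i) (B t)) ∧
      (∀ t u, t ≠ u → ∀ b, (b ∈ B t ∧ b ∈ B u) ↔ b ∈ C) ∧ C.card = g i := by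
    intro i
    by_cases hi : i ∈ s
    · obtain ⟨B, C, h1, h2, h3⟩ := hg hi
      exact ⟨B, C, fun _ => ⟨h1, h2, h3⟩⟩
    · exact ⟨fun _ => ∅, ∅, fun h => absurd h hi⟩
  choose B C hBC using hg'
  -- a block determines the part it belongs to
  have key : ∀ i ∈ s, ∀ j ∈ s, ∀ t u b, b ∈ B i t → b ∈ B j u → i = j := by
    intro i hi j hj t u b h1 h2
    obtain ⟨x, hx, y, hy, hxy⟩ := ((hBC i hi).1 t).exists_adj h1
    exact hd i hi j hj x y hxy (((hBC j hj).1 u).adj b h2 x hx y hy hxy.ne)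
  have hCB : ∀ i ∈ s, ∀ b ∈ C i, ∀ t, b ∈ B i t := by
    intro i hi b hb t
    have hne : t ≠ t + 1 := by fin_cases t <;> decide
    exact (((hBC i hi).2.1 t (t + 1) hne b).2 hb).1
  refine ⟨fun t => s.biUnion fun i => B i t, s.biUnion C, fun t => ⟨⟨?_, ?_⟩, ?_⟩, ?_, ?_⟩
  · intro b hb x hx y hy hxy
    obtain ⟨i, hi, hb⟩ := Finset.mem_biUnion.1 hb
    exact (hG x y).2 ⟨i, hi, ((hBC i hi).1 t).adj b hb x hx y hy hxy⟩
  · intro x y hxy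
    obtain ⟨i, hi, hxy'⟩ := (hG x y).1 hxy
    obtain ⟨b, ⟨hb, hx, hy⟩, hu⟩ := ((hBC i hi).1 t).uniq x y hxy'
    refine ⟨b, ⟨Finset.mem_biUnion.2 ⟨i, hi, hb⟩, hx, hy⟩, ?_⟩
    rintro c ⟨hc, hcx, hcy⟩
    obtain ⟨j, hj, hc⟩ := Finset.mem_biUnion.1 hc
    have : i = j := hd i hi j hj x y hxy' (((hBC j hj).1 t).adj c hc x hcx y hcy hxy.ne)
    subst this
    exact hu c ⟨hc, hcx, hcy⟩
  · intro b hb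
    obtain ⟨i, hi, hb⟩ := Finset.mem_biUnion.1 hb
    exact ((hBC i hi).1 t).card b hb
  · intro t u htu b
    simp only [Finset.mem_biUnion]
    constructor
    · rintro ⟨⟨i, hi, h1⟩, j, hj, h2⟩
      have := key i hi j hj t u b h1 h2
      subst this
      exact ⟨i, hi, ((hBC i hi).2.1 t u htu b).1 ⟨h1, h2⟩⟩
    · rintro ⟨i, hi, hb⟩
      exact ⟨⟨i, hi, hCB i hi b hb t⟩, i, hi, hCB i hi b hb u⟩
  · rw [Finset.card_biUnion]
    · exact Finset.sum_congr rfl fun i hi => (hBC i hi).2.2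
    · intro i hi j hj hij
      rw [Function.onFun, Finset.disjoint_left]
      intro b hb hb'
      exact hij (key i hi j hj 0 0 b (hCB i hi b hb 0) (hCB j hj b hb' 0))

theorem Spec_add {α : Type} (G H K : SimpleGraph α)
    (hG : ∀ x y, G.Adj x y ↔ H.Adj x y ∨ K.Adj x y)
    (hd : ∀ x y, H.Adj x y → ¬ K.Adj x y) : Spec H + Spec K ⊆ Spec G := by
  have := Spec_sum G (fun b : Bool => cond b H K) Finset.univ
    (by intro x y; simp [hG, or_comm])
    (by
      rintro (_ | _) - (_ | _) - x y h1 h2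
      · rfl
      · exact absurd h1 (hd x y h2)
      · exact absurd h2 (hd x y h1)
      · rfl)
  simpa using this

theorem IsDec.map {α β : Type} {G : SimpleGraph α} {B : Finset (Finset α)} (h : IsDec G B)
    (f : α ↪ β) : IsDec (G.map f) (B.map (Finset.mapEmbedding f).toEmbedding) := by
  refine ⟨⟨?_, ?_⟩, ?_⟩
  · intro b hb x hx y hy hxy
    obtain ⟨c, hc, rfl⟩ := Finset.mem_map.1 hb
    obtain ⟨x', hx', rfl⟩ := Finset.mem_map.1 hx
    obtain ⟨y', hy', rfl⟩ := Finset.mem_map.1 hy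
    exact (SimpleGraph.map_adj _ _ _ _).2
      ⟨x', y', h.adj c hc x' hx' y' hy' (fun e => hxy (by rw [e])), rfl, rfl⟩
  · intro x y hxy
    obtain ⟨x', y', hxy', rfl, rfl⟩ := (SimpleGraph.map_adj _ _ _ _).1 hxy
    obtain ⟨b, ⟨hb, hx, hy⟩, hu⟩ := h.uniq x' y' hxy'
    refine ⟨b.map f, ⟨Finset.mem_map.2 ⟨b, hb, rfl⟩, Finset.mem_map_of_mem f hx,
      Finset.mem_map_of_mem f hy⟩, ?_⟩
    rintro c' ⟨hc', hcx, hcy⟩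
    obtain ⟨c, hc, rfl⟩ := Finset.mem_map.1 hc'
    have := hu c ⟨hc, (Finset.mem_map' f).1 hcx, (Finset.mem_map' f).1 hcy⟩
    rw [this]; rfl
  · intro b hb
    obtain ⟨c, hc, rfl⟩ := Finset.mem_map.1 hb
    exact (Finset.card_map f).trans (h.card c hc)

theorem Spec_map {α β : Type} (G : SimpleGraph α) (f : α ↪ β) : Spec G ⊆ Spec (G.map f) := by
  rintro k ⟨B, C, h1, h2, h3⟩
  refine ⟨fun i => (B i).map (Finset.mapEmbedding f).toEmbedding,
    C.map (Finset.mapEmbedding f).toEmbedding, fun i => (h1 i).map f, ?_, by simpa using h3⟩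
  intro i j hij b
  constructor
  · rintro ⟨hb, hb'⟩
    obtain ⟨c, hc, rfl⟩ := Finset.mem_map.1 hb
    exact Finset.mem_map_of_mem _ ((h2 i j hij c).1 ⟨hc, (Finset.mem_map' _).1 hb'⟩)
  · intro hb
    obtain ⟨c, hc, rfl⟩ := Finset.mem_map.1 hb
    obtain ⟨hi, hj⟩ := (h2 i j hij c).2 hc
    exact ⟨Finset.mem_map_of_mem _ hi, Finset.mem_map_of_mem _ hj⟩

/-- Isomorphic graphs have the same spectrum; one inclusion is enough by symmetry. -/
theorem Spec_equiv {α β : Type} (G : SimpleGraph α) (H : SimpleGraph β) (e : α ≃ β)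
    (h : ∀ x y, G.Adj x y ↔ H.Adj (e x) (e y)) : Spec G ⊆ Spec H := by
  have : G.map e.toEmbedding = H := by
    ext x y
    rw [SimpleGraph.map_adj]
    constructor
    · rintro ⟨x', y', hxy, rfl, rfl⟩
      exact (h x' y').1 hxy
    · intro hxy
      exact ⟨e.symm x, e.symm y, (h _ _).2 (by simpa using hxy), by simp, by simp⟩
  rw [← this]
  exact Spec_map G _

theorem J_subset_Spec_top {α : Type} [Fintype α] {v : ℕ} (h : Fintype.card α = v) :
    J v ⊆ Spec (⊤ : SimpleGraph α) :=
  Spec_equiv _ _ (Fintype.equivFinOfCardEq h).symm (by simp)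

theorem Spec_top_subset_J {α : Type} [Fintype α] {v : ℕ} (h : Fintype.card α = v) :
    Spec (⊤ : SimpleGraph α) ⊆ J v :=
  Spec_equiv _ _ (Fintype.equivFinOfCardEq h) (by simp)

theorem M_subset {α : Type} [Fintype α] {k : ℕ} (n : ℕ) (h : Fintype.card α = k) :
    M k n ⊆ Spec (blowUp (⊤ : SimpleGraph α) n) :=
  Spec_equiv _ _ ((Fintype.equivFinOfCardEq h).symm.prodCongr (Equiv.refl _)) (by simp)

/-! ### Wilson's construction: blowing up and filling in -/

/-- If the blocks in `B` decompose `G`, then the blow-ups of the blocks decompose the blow-up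
of `G`. -/
theorem blowUp_sum {α : Type} (G : SimpleGraph α) (B : Finset (Finset α)) (h : IsDecomp G B)
    (n : ℕ) : ∑ b ∈ B, M b.card n ⊆ Spec (blowUp G n) := by
  have h1 : ∑ b ∈ B, M b.card n ⊆ ∑ b ∈ B, Spec ((blowUp (⊤ : SimpleGraph b) n).map
      ((Function.Embedding.subtype _).prodMap (Function.Embedding.refl _))) :=
    Set.finsetSum_subset_finsetSum _ _ _ fun b _ =>
      (M_subset n (Fintype.card_coe b)).trans (Spec_map _ _)
  have hadj : ∀ (b : Finset α) (x y : α × Fin n), ((blowUp (⊤ : SimpleGraph b) n).map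
      ((Function.Embedding.subtype _).prodMap (Function.Embedding.refl _))).Adj x y ↔
      x.1 ∈ b ∧ y.1 ∈ b ∧ x.1 ≠ y.1 := by
    rintro b ⟨x, i⟩ ⟨y, j⟩
    simp only [SimpleGraph.map_adj]
    constructor
    · rintro ⟨⟨⟨x', hx⟩, i'⟩, ⟨⟨y', hy⟩, j'⟩, hadj, h1, h2⟩
      simp only [Function.Embedding.prodMap, Function.Embedding.coeFn_mk, Prod.map,
        Function.Embedding.subtype_apply, Prod.mk.injEq] at h1 h2
      obtain ⟨rfl, -⟩ := h1
      obtain ⟨rfl, -⟩ := h2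
      exact ⟨hx, hy, by simpa using hadj⟩
    · rintro ⟨hx, hy, hne⟩
      exact ⟨(⟨x, hx⟩, i), (⟨y, hy⟩, j), by simpa using hne, rfl, rfl⟩
  refine h1.trans (Spec_sum _ _ _ ?_ ?_)
  · intro x y
    simp only [hadj]
    constructor
    · intro hxy
      obtain ⟨b, ⟨hb, hx, hy⟩, -⟩ := h.uniq x.1 y.1 hxy
      exact ⟨b, hb, hx, hy, SimpleGraph.Adj.ne hxy⟩
    · rintro ⟨b, hb, hx, hy, hne⟩
      exact h.adj b hb _ hx _ hy hne
  · intro b hb c hc x y h1 h2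
    rw [hadj] at h1 h2
    exact (h.uniq x.1 y.1 (h.adj b hb _ h1.1 _ h1.2.1 h1.2.2)).unique
      ⟨hb, h1.1, h1.2.1⟩ ⟨hc, h2.1, h2.2.1⟩

/-- The complete multipartite graph with parts the fibres of `grp`. -/
abbrev groupGraph {α κ : Type} (grp : α → κ) : SimpleGraph α := (⊤ : SimpleGraph κ).comap grp

/-- Filling in the groups: the complete graph on `n |U| + 1` points consists of the blow-up of a
complete multipartite graph on `U` and, for each part, the complete graph on the blow-up of that
part and one further point. -/
theorem fill_groups {U κ : Type} [Fintype U] [Fintype κ] [DecidableEq κ] (grp : U → κ) (n : ℕ) :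
    ∑ g, J (n * (Finset.univ.filter fun x => grp x = g).card + 1) + Spec (blowUp (groupGraph grp) n)
      ⊆ J (n * Fintype.card U + 1) := by
  let f : (g : κ) → Option ({x // grp x = g} × Fin n) ↪ Option (U × Fin n) := fun g =>
    ((Function.Embedding.subtype _).prodMap (Function.Embedding.refl _)).optionMap
  let H : κ → SimpleGraph (Option (U × Fin n)) := fun g => (⊤ : SimpleGraph _).map (f g)
  let K : SimpleGraph (Option (U × Fin n)) :=
    (blowUp (groupGraph grp) n).map Function.Embedding.some
  have hH : ∀ g x y, (H g).Adj x y ↔ x ≠ y ∧ (∀ p ∈ x, grp p.1 = g) ∧ ∀ p ∈ y, grp p.1 = g := by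
    intro g x y
    simp only [H, SimpleGraph.map_adj]
    constructor
    · rintro ⟨a, b, hab, rfl, rfl⟩
      refine ⟨fun e => hab ((f g).injective e), ?_, ?_⟩
      · rcases a with _ | ⟨⟨a, ha⟩, i⟩ <;> simp_all [f]
      · rcases b with _ | ⟨⟨b, hb⟩, i⟩ <;> simp_all [f]
    · rintro ⟨hne, hx, hy⟩
      have lift : ∀ z : Option (U × Fin n), (∀ p ∈ z, grp p.1 = g) → ∃ a, f g a = z := by
        rintro (_ | ⟨a, i⟩) hz
        · exact ⟨none, rfl⟩
        · exact ⟨some (⟨a, hz _ rfl⟩, i), rfl⟩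
      obtain ⟨a, rfl⟩ := lift x hx
      obtain ⟨b, rfl⟩ := lift y hy
      exact ⟨a, b, fun e => hne (by rw [e]), rfl, rfl⟩
  have hK : ∀ x y, K.Adj x y ↔ ∃ p ∈ x, ∃ q ∈ y, grp p.1 ≠ grp q.1 := by
    intro x y
    simp only [K, SimpleGraph.map_adj]
    constructor
    · rintro ⟨a, b, hab, rfl, rfl⟩
      exact ⟨a, rfl, b, rfl, by simpa using hab⟩
    · rintro ⟨p, hp, q, hq, hne⟩
      exact ⟨p, q, by simpa using hne, hp.symm, hq.symm⟩
  have hcard : ∀ g, Fintype.card (Option ({x // grp x = g} × Fin n)) =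
      n * (Finset.univ.filter fun x => grp x = g).card + 1 := by
    intro g
    rw [Fintype.card_option, Fintype.card_prod, Fintype.card_fin, Fintype.card_subtype, mul_comm]
  have h1 : ∑ g, J (n * (Finset.univ.filter fun x => grp x = g).card + 1) ⊆
      Spec (⨆ g, H g) := by
    refine (Set.finsetSum_subset_finsetSum _ _ _ fun g _ =>
      (J_subset_Spec_top (hcard g)).trans (Spec_map _ (f g))).trans (Spec_sum _ _ _ ?_ ?_)
    · intro x y
      simp [SimpleGraph.iSup_adj, H]
    · intro g _ g' _ x y h h'
      have h := (hH g x y).1 h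
      have h' := (hH g' x y).1 h'
      rcases x with _ | p
      · rcases y with _ | q
        · exact absurd rfl h.1
        · exact (h.2.2 q rfl).symm.trans (h'.2.2 q rfl)
      · exact (h.2.1 p rfl).symm.trans (h'.2.1 p rfl)
  have h2 : Spec (⨆ g, H g) + Spec K ⊆ Spec (⊤ : SimpleGraph (Option (U × Fin n))) := by
    refine Spec_add _ _ _ ?_ ?_
    · intro x y
      simp only [SimpleGraph.iSup_adj, hH, hK, SimpleGraph.top_adj]
      constructor
      · intro hne
        rcases x with _ | p
        · rcases y with _ | q
          · exact absurd rfl hne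
          · exact Or.inl ⟨grp q.1, hne, by simp, by simp⟩
        · rcases y with _ | q
          · exact Or.inl ⟨grp p.1, hne, by simp, by simp⟩
          · by_cases he : grp p.1 = grp q.1
            · exact Or.inl ⟨grp p.1, hne, by simp, by simp [he]⟩
            · exact Or.inr ⟨p, rfl, q, rfl, he⟩
      · rintro (⟨g, hne, -⟩ | ⟨p, hp, q, hq, hne⟩)
        · exact hne
        · rintro rfl
          exact hne (by rw [Option.mem_unique hp hq])
    · intro x y h h'
      rw [SimpleGraph.iSup_adj] at h
      obtain ⟨g, h⟩ := h
      obtain ⟨-, hx, hy⟩ := (hH g x y).1 h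
      obtain ⟨p, hp, q, hq, hne⟩ := (hK x y).1 h'
      exact hne ((hx p hp).trans (hy q hq).symm)
  refine (Set.add_subset_add h1 (Spec_map _ _)).trans (h2.trans (Spec_top_subset_J ?_))
  simp [mul_comm]

/-! ### Decompositions given by lists of blocks -/

/-- Insertion of a number into a sorted list. -/
def ins (x : ℕ) : List ℕ → List ℕ
  | [] => [x]
  | y :: l => bif Nat.ble x y then x :: y :: l else y :: ins x l

/-- The blocks obtained from the base blocks in `L` by applying `0, …, cnt - 1` times the
permutation `x ↦ x + step (mod n)`, which fixes all points from `n` on. -/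
def develop (n step cnt : ℕ) (L : List (List ℕ)) : List (List ℕ) :=
  L.flatMap fun b => (List.range cnt).map fun i =>
    (b.map fun x => bif Nat.blt x n then (x + step * i) % n else x).foldr ins []

/-- Codes `x * N + y` of the pairs of entries of a list, `x` standing before `y`. -/
def pairCodes (N : ℕ) : List ℕ → List ℕ
  | [] => []
  | x :: l => l.map (fun y => x * N + y) ++ pairCodes N l

/-- Adds the members of a list to the set of numbers whose characteristic bit string is `m`;
fails if a number is already there. -/
def pack : List ℕ → ℕ → Option ℕ
  | [], m => some m
  | c :: l, m => bif m.testBit c then none else pack l (m ||| 1 <<< c)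

/-- Whether a list is strictly increasing. -/
def sortedB : List ℕ → Bool
  | [] => true
  | x :: l => (l.all fun y => Nat.blt x y) && sortedB l

/-- Whether the blocks in `L` are strictly increasing lists of numbers below `N` and decompose
the complete multipartite graph on `{0, …, N - 1}` with parts given by `grp`. -/
def check (N : ℕ) (grp : ℕ → ℕ) (L : List (List ℕ)) : Bool :=
  (L.all fun b => sortedB b && b.all fun x => Nat.blt x N) &&
  match pack (L.flatMap (pairCodes N)) 0 with
  | none => false
  | some m => (List.range N).all fun x => (List.range N).all fun y =>
      m.testBit (x * N + y) == (Nat.blt x y && !Nat.beq (grp x) (grp y))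

/-- Whether the blocks in `L` differ pairwise in their first `m` entries, which is faster to see
than that they are distinct if `m = 3`. -/
def distinctB (m N : ℕ) (L : List (List ℕ)) : Bool :=
  (pack (L.map fun b => (b.take m).foldl (fun a x => a * N + x) 0) 0).isSome

/-- A list of numbers read as a set of points. -/
def toBlock (N : ℕ) (b : List ℕ) : Finset (Fin N) := Finset.univ.filter fun x => x.1 ∈ b

/-- A list of lists of numbers read as a set of blocks. -/
def toBlocks (N : ℕ) (L : List (List ℕ)) : Finset (Finset (Fin N)) := (L.map (toBlock N)).toFinset

theorem pack_spec : ∀ (l : List ℕ) (m m' : ℕ), pack l m = some m' →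
    l.Nodup ∧ (∀ c ∈ l, m.testBit c = false) ∧
    ∀ c, m'.testBit c = true ↔ m.testBit c = true ∨ c ∈ l
  | [], m, m', h => by
    simp only [pack, Option.some.injEq] at h
    subst h
    simp
  | c :: l, m, m', h => by
    cases hc : m.testBit c with
    | true => simp [pack, hc] at h
    | false =>
      simp only [pack, hc, cond_false] at h
      obtain ⟨h1, h2, h3⟩ := pack_spec l _ _ h
      have hbit : ∀ d, (m ||| 1 <<< c).testBit d = (m.testBit d || decide (c = d)) := by
        intro d
        rw [Nat.testBit_or, Nat.one_shiftLeft, Nat.testBit_two_pow]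
      have h2' : ∀ d ∈ l, m.testBit d = false ∧ c ≠ d := by
        intro d hd
        have := h2 d hd
        rw [hbit] at this
        simpa using this
      refine ⟨List.nodup_cons.2 ⟨fun hcl => (h2' c hcl).2 rfl, h1⟩, ?_, ?_⟩
      · intro d hd
        rcases List.mem_cons.1 hd with rfl | hd
        · exact hc
        · exact (h2' d hd).1
      · intro d
        rw [h3, hbit, Bool.or_eq_true, decide_eq_true_eq, List.mem_cons]
        constructor
        · rintro ((h | rfl) | h) <;> simp_all
        · rintro (h | rfl | h) <;> simp_all

theorem sortedB_spec : ∀ {l : List ℕ}, sortedB l = true → l.Pairwise (· < ·)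
  | [], _ => List.Pairwise.nil
  | x :: l, h => by
    simp only [sortedB, Bool.and_eq_true, List.all_eq_true, Nat.blt_eq] at h
    exact List.pairwise_cons.2 ⟨h.1, sortedB_spec h.2⟩

theorem mem_pairCodes (N : ℕ) : ∀ {l : List ℕ}, l.Pairwise (· < ·) → ∀ c,
    c ∈ pairCodes N l ↔ ∃ x ∈ l, ∃ y ∈ l, x < y ∧ c = x * N + y
  | [], _, c => by simp [pairCodes]
  | a :: l, h, c => by
    obtain ⟨h1, h2⟩ := List.pairwise_cons.1 h
    simp only [pairCodes, List.mem_append, List.mem_map, mem_pairCodes N h2 c]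
    constructor
    · rintro (⟨y, hy, rfl⟩ | ⟨x, hx, y, hy, hxy, rfl⟩)
      · exact ⟨a, by simp, y, by simp [hy], h1 y hy, rfl⟩
      · exact ⟨x, by simp [hx], y, by simp [hy], hxy, rfl⟩
    · rintro ⟨x, hx, y, hy, hxy, rfl⟩
      rcases List.mem_cons.1 hx with rfl | hx'
      · rcases List.mem_cons.1 hy with rfl | hy'
        · exact absurd hxy (lt_irrefl _)
        · exact Or.inl ⟨y, hy', rfl⟩
      · rcases List.mem_cons.1 hy with rfl | hy'
        · exact absurd hxy (not_lt.2 (h1 x hx').le)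
        · exact Or.inr ⟨x, hx', y, hy', hxy, rfl⟩

theorem toBlock_inj {N : ℕ} {b c : List ℕ} (hb : b.Pairwise (· < ·)) (hc : c.Pairwise (· < ·))
    (hbN : ∀ x ∈ b, x < N) (hcN : ∀ x ∈ c, x < N) (h : toBlock N b = toBlock N c) : b = c := by
  refine List.Perm.eq_of_pairwise' hb hc ?_
  rw [List.perm_ext_iff_of_nodup (hb.imp ne_of_lt) (hc.imp ne_of_lt)]
  intro x
  constructor
  · intro hx
    have : (⟨x, hbN x hx⟩ : Fin N) ∈ toBlock N b := by simp [toBlock, hx]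
    rw [h] at this
    simpa [toBlock] using this
  · intro hx
    have : (⟨x, hcN x hx⟩ : Fin N) ∈ toBlock N c := by simp [toBlock, hx]
    rw [← h] at this
    simpa [toBlock] using this

theorem card_toBlock {N : ℕ} {b : List ℕ} (hb : b.Pairwise (· < ·)) (hbN : ∀ x ∈ b, x < N) :
    (toBlock N b).card = b.length := by
  rw [← List.toFinset_card_of_nodup (hb.imp ne_of_lt)]
  refine Finset.card_bij (fun x _ => x.1) ?_ ?_ ?_
  · intro x hx; simpa [toBlock] using hx
  · intro x _ y _ h; exact Fin.ext h
  · intro x hx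
    have hx : x ∈ b := by simpa using hx
    exact ⟨⟨x, hbN x hx⟩, by simp [toBlock, hx], rfl⟩

theorem check_blocks {N : ℕ} {grp : ℕ → ℕ} {L : List (List ℕ)} (h : check N grp L = true) :
    ∀ b ∈ L, b.Pairwise (· < ·) ∧ ∀ x ∈ b, x < N := by
  intro b hb
  simp only [check, Bool.and_eq_true, List.all_eq_true, Nat.blt_eq] at h
  exact ⟨sortedB_spec (h.1 b hb).1, (h.1 b hb).2⟩

theorem check_decomp {N : ℕ} {grp : ℕ → ℕ} {L : List (List ℕ)} (h : check N grp L = true) :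
    IsDecomp (groupGraph fun x : Fin N => grp x.1) (toBlocks N L) := by
  have hL := check_blocks h
  simp only [check, Bool.and_eq_true] at h
  have h2 := h.2
  split at h2
  · exact absurd h2 (by simp)
  rename_i m hm
  obtain ⟨hnd, -, hbit⟩ := pack_spec _ _ _ hm
  have hcode : ∀ x y, x < N → y < N →
      (x * N + y ∈ L.flatMap (pairCodes N) ↔ x < y ∧ grp x ≠ grp y) := by
    intro x y hx hy
    have h3 := List.all_eq_true.1 (List.all_eq_true.1 h2 x (List.mem_range.2 hx)) y
      (List.mem_range.2 hy)
    have h4 := hbit (x * N + y)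
    rw [beq_iff_eq] at h3
    rw [h3] at h4
    simp only [Bool.and_eq_true, Nat.blt_eq, Bool.not_eq_true', Nat.zero_testBit,
      Bool.false_eq_true, false_or, ← Bool.not_eq_true, Nat.beq_eq] at h4
    exact h4.symm
  have hlt : ∀ x y : Fin N, x < y →
      (grp x.1 ≠ grp y.1 ↔ ∃ b ∈ L, x.1 ∈ b ∧ y.1 ∈ b) := by
    intro x y hxy
    have h3 := hcode x.1 y.1 x.2 y.2
    rw [List.mem_flatMap] at h3
    constructor
    · intro hne
      obtain ⟨b, hb, hc⟩ := h3.2 ⟨hxy, hne⟩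
      obtain ⟨x', hx', y', hy', -, he⟩ := (mem_pairCodes N (hL b hb).1 _).1 hc
      have hyN := (hL b hb).2 y' hy'
      have e1 : x.1 = x' := by
        have := congrArg (· / N) he
        simpa [Nat.mul_comm _ N, Nat.mul_add_div (by omega : N > 0), Nat.div_eq_of_lt y.2,
          Nat.div_eq_of_lt hyN] using this
      subst e1
      have e2 : y.1 = y' := by omega
      subst e2
      exact ⟨b, hb, hx', hy'⟩
    · rintro ⟨b, hb, hx, hy⟩
      exact (h3.1 ⟨b, hb, (mem_pairCodes N (hL b hb).1 _).2
        ⟨x.1, hx, y.1, hy, hxy, rfl⟩⟩).2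
  have huniq : ∀ x y : Fin N, x < y → ∀ b ∈ L, ∀ c ∈ L, x.1 ∈ b → y.1 ∈ b → x.1 ∈ c →
      y.1 ∈ c → b = c := by
    intro x y hxy b hb c hc hxb hyb hxc hyc
    by_contra hne
    have hp := (List.nodup_flatMap.1 hnd).2
    have : Std.Symm (Function.onFun List.Disjoint (pairCodes N)) :=
      ⟨fun _ _ h => List.Disjoint.symm h⟩
    have hdis : List.Disjoint (pairCodes N b) (pairCodes N c) := hp.forall hb hc hne
    exact hdis ((mem_pairCodes N (hL b hb).1 _).2 ⟨x.1, hxb, y.1, hyb, hxy, rfl⟩)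
      ((mem_pairCodes N (hL c hc).1 _).2 ⟨x.1, hxc, y.1, hyc, hxy, rfl⟩)
  have hmem : ∀ B, B ∈ toBlocks N L ↔ ∃ b ∈ L, toBlock N b = B := by simp [toBlocks]
  have hmb : ∀ (x : Fin N) b, x ∈ toBlock N b ↔ x.1 ∈ b := by simp [toBlock]
  constructor
  · intro B hB x hx y hy hxy
    obtain ⟨b, hb, rfl⟩ := (hmem B).1 hB
    rw [hmb] at hx hy
    rcases lt_or_gt_of_ne hxy with hlt' | hlt'
    · exact (hlt x y hlt').2 ⟨b, hb, hx, hy⟩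
    · exact ((hlt y x hlt').2 ⟨b, hb, hy, hx⟩).symm
  · have main : ∀ x y : Fin N, x < y → grp x.1 ≠ grp y.1 →
        ∃! B, B ∈ toBlocks N L ∧ x ∈ B ∧ y ∈ B := by
      intro x y hxy hne
      obtain ⟨b, hb, hx, hy⟩ := (hlt x y hxy).1 hne
      refine ⟨toBlock N b, ⟨(hmem _).2 ⟨b, hb, rfl⟩, (hmb _ _).2 hx, (hmb _ _).2 hy⟩, ?_⟩
      rintro C ⟨hC, hxC, hyC⟩
      obtain ⟨c, hc, rfl⟩ := (hmem C).1 hC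
      rw [huniq x y hxy b hb c hc hx hy ((hmb _ _).1 hxC) ((hmb _ _).1 hyC)]
    intro x y hxy
    have hne : grp x.1 ≠ grp y.1 := hxy
    rcases lt_trichotomy x y with hl | rfl | hl
    · exact main x y hl hne
    · exact absurd rfl hne
    · obtain ⟨B, ⟨h1, h2, h3⟩, h4⟩ := main y x hl hne.symm
      exact ⟨B, ⟨h1, h3, h2⟩, fun C hC => h4 C ⟨hC.1, hC.2.2, hC.2.1⟩⟩

theorem distinctB_spec {m N : ℕ} {L : List (List ℕ)} (h : distinctB m N L = true) : L.Nodup := by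
  obtain ⟨m, hm⟩ := Option.isSome_iff_exists.1 h
  exact (pack_spec _ _ _ hm).1.of_map

theorem card_toBlocks {N : ℕ} {L : List (List ℕ)}
    (hL : ∀ b ∈ L, b.Pairwise (· < ·) ∧ ∀ x ∈ b, x < N) (hd : L.Nodup) :
    (toBlocks N L).card = L.length := by
  rw [toBlocks, List.toFinset_card_of_nodup, List.length_map]
  exact hd.map_on fun b hb c hc e =>
    toBlock_inj (hL b hb).1 (hL c hc).1 (hL b hb).2 (hL c hc).2 e

theorem check_dec {N : ℕ} {grp : ℕ → ℕ} {L : List (List ℕ)} (h : check N grp L = true)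
    (h4 : (L.all fun b => b.length == 4) = true) :
    IsDec (groupGraph fun x : Fin N => grp x.1) (toBlocks N L) := by
  refine ⟨check_decomp h, ?_⟩
  intro B hB
  obtain ⟨b, hb, rfl⟩ : ∃ b ∈ L, toBlock N b = B := by simpa [toBlocks] using hB
  rw [card_toBlock (check_blocks h b hb).1 (check_blocks h b hb).2]
  simpa using List.all_eq_true.1 h4 b hb

/-- Whether `C ++ T₀`, `C ++ T₁`, `C ++ T₂` are three `K₄`-decompositions any two of which have
exactly the blocks in `C` in common; the first `m` entries of the blocks tell them apart. -/
def checkTriple (m N : ℕ) (grp : ℕ → ℕ) (C T₀ T₁ T₂ : List (List ℕ)) : Bool :=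
  (check N grp (C ++ T₀) && check N grp (C ++ T₁) && check N grp (C ++ T₂)) &&
  ((C ++ T₀ ++ T₁ ++ T₂).all fun b => b.length == 4) && distinctB m N (C ++ T₀ ++ T₁ ++ T₂)

theorem checkTriple_spec {m N : ℕ} {grp : ℕ → ℕ} {C T₀ T₁ T₂ : List (List ℕ)}
    (h : checkTriple m N grp C T₀ T₁ T₂ = true) :
    C.length ∈ Spec (groupGraph fun x : Fin N => grp x.1) ∧
    (C ++ T₀).length ∈ Spec (groupGraph fun x : Fin N => grp x.1) := by
  simp only [checkTriple, Bool.and_eq_true] at h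
  obtain ⟨⟨⟨⟨h0, h1⟩, h2⟩, h4⟩, hd⟩ := h
  have hd := distinctB_spec hd
  let T : Fin 3 → List (List ℕ) := ![T₀, T₁, T₂]
  have hT : ∀ i, check N grp (C ++ T i) = true := by
    intro i; fin_cases i <;> assumption
  have h4' : ∀ i, ((C ++ T i).all fun b => b.length == 4) = true := by
    simp only [List.all_append, Bool.and_eq_true] at h4
    intro i
    fin_cases i <;> simp only [List.all_append, Bool.and_eq_true, T]
    · exact ⟨h4.1.1.1, h4.1.1.2⟩
    · exact ⟨h4.1.1.1, h4.1.2⟩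
    · exact ⟨h4.1.1.1, h4.2⟩
  have hdec : ∀ i, IsDec _ (toBlocks N (C ++ T i)) := fun i => check_dec (hT i) (h4' i)
  have hdis : ∀ i j, i ≠ j → ∀ b, b ∈ T i → b ∉ T j := by
    rw [List.nodup_append', List.nodup_append', List.nodup_append'] at hd
    obtain ⟨⟨⟨-, -, -⟩, -, d01⟩, -, d2⟩ := hd
    have e01 : ∀ b, b ∈ T₀ → b ∉ T₁ := fun b hb hb' => d01 (by simp [hb]) hb'
    have e02 : ∀ b, b ∈ T₀ → b ∉ T₂ := fun b hb hb' => d2 (by simp [hb]) hb'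
    have e12 : ∀ b, b ∈ T₁ → b ∉ T₂ := fun b hb hb' => d2 (by simp [hb]) hb'
    intro i j hij b
    fin_cases i <;> fin_cases j <;> simp only [T] <;> first
      | exact absurd rfl hij
      | exact e01 b
      | exact e02 b
      | exact e12 b
      | exact fun h h' => e01 b h' h
      | exact fun h h' => e02 b h' h
      | exact fun h h' => e12 b h' h
  have hmem : ∀ L B, B ∈ toBlocks N L ↔ ∃ b ∈ L, toBlock N b = B := by simp [toBlocks]
  constructor
  · refine ⟨fun i => toBlocks N (C ++ T i), toBlocks N C, hdec, ?_, ?_⟩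
    · intro i j hij B
      simp only [hmem]
      constructor
      · rintro ⟨⟨b, hb, rfl⟩, c, hc, e⟩
        have hbs := check_blocks (hT i) b hb
        have hcs := check_blocks (hT j) c hc
        have := toBlock_inj hcs.1 hbs.1 hcs.2 hbs.2 e
        subst this
        refine ⟨c, ?_, rfl⟩
        rcases List.mem_append.1 hb with hb | hb
        · exact hb
        rcases List.mem_append.1 hc with hc | hc
        · exact hc
        exact absurd hc (hdis i j hij c hb)
      · rintro ⟨b, hb, rfl⟩
        exact ⟨⟨b, by simp [hb], rfl⟩, b, by simp [hb], rfl⟩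
    · refine card_toBlocks (fun b hb => check_blocks (hT 0) b (by simp [hb])) ?_
      exact (hd.sublist (by simp))
  · rw [← card_toBlocks (check_blocks h0) (hd.sublist (by simp))]
    exact (hdec 0).card_mem

/-! ### Explicit designs -/

/-- The first of three disjoint `S(2,4,25)` designs. -/
def k25a : List (List ℕ) :=
  develop 25 5 5 [[0, 1, 5, 12], [0, 2, 10, 24], [0, 3, 13, 22], [0, 4, 9, 11], [0, 6, 8, 16],
   [0, 18, 19, 23], [1, 2, 6, 13], [1, 4, 14, 23], [1, 7, 9, 17], [2, 3, 7, 14]]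

/-- The second of three disjoint `S(2,4,25)` designs. -/
def k25b : List (List ℕ) :=
  develop 25 5 5 [[0, 1, 6, 14], [0, 2, 12, 23], [0, 3, 10, 21], [0, 4, 5, 13], [0, 7, 9, 19],
   [0, 16, 17, 22], [1, 3, 13, 24], [1, 4, 11, 22], [1, 17, 18, 23], [2, 18, 19, 24]]

/-- The third of three disjoint `S(2,4,25)` designs. -/
def k25c : List (List ℕ) :=
  develop 25 5 5 [[0, 1, 7, 11], [0, 2, 14, 22], [0, 3, 12, 20], [0, 4, 6, 10], [0, 9, 23, 24],
   [0, 13, 16, 18], [1, 2, 8, 12], [1, 4, 13, 21], [1, 14, 17, 19], [2, 3, 9, 13]]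

/-- The first of three disjoint `S(2,4,37)` designs. -/
def k37a : List (List ℕ) :=
  develop 37 1 37 [[0, 1, 18, 30], [0, 2, 13, 16], [0, 4, 9, 31]]

/-- The second of three disjoint `S(2,4,37)` designs. -/
def k37b : List (List ℕ) :=
  develop 37 1 37 [[0, 2, 23, 36], [0, 4, 26, 32], [0, 8, 18, 25]]

/-- The third of three disjoint `S(2,4,37)` designs. -/
def k37c : List (List ℕ) :=
  develop 37 1 37 [[0, 3, 16, 17], [0, 2, 6, 11], [0, 12, 19, 27]]

/-- The first of three disjoint `S(2,4,73)` designs. -/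
def k73a : List (List ℕ) :=
  develop 73 1 73 [[0, 1, 8, 10], [0, 3, 33, 37], [0, 5, 19, 61], [0, 6, 24, 53], [0, 11, 32,
   57], [0, 13, 28, 51]]

/-- The second of three disjoint `S(2,4,73)` designs. -/
def k73b : List (List ℕ) :=
  develop 73 1 73 [[0, 2, 16, 20], [0, 1, 6, 66], [0, 10, 38, 49], [0, 12, 33, 48], [0, 22, 41,
   64], [0, 26, 29, 56]]

/-- The third of three disjoint `S(2,4,73)` designs. -/
def k73c : List (List ℕ) :=
  develop 73 1 73 [[0, 3, 24, 30], [0, 9, 26, 38], [0, 15, 37, 57], [0, 13, 18, 72], [0, 23, 25,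
   33], [0, 7, 11, 39]]

/-- Three projective planes of order 3 with no common block: the common blocks and the three sets of
remaining blocks. -/
def k13_0 : List (List ℕ) × List (List ℕ) × List (List ℕ) × List (List ℕ) :=
  ([], [[0, 1, 3, 9], [0, 2, 8, 12], [0, 4, 5, 7], [0, 6, 10, 11], [1, 2, 4, 10], [1, 5, 6, 8],
   [1, 7, 11, 12], [2, 3, 5, 11], [2, 6, 7, 9], [3, 4, 6, 12], [3, 7, 8, 10], [4, 8, 9, 11], [5,
   9, 10, 12]], [[0, 1, 9, 10], [0, 2, 5, 6], [0, 3, 11, 12], [0, 4, 7, 8], [1, 2, 4, 11], [1,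
   3, 5, 8], [1, 6, 7, 12], [2, 3, 7, 9], [2, 8, 10, 12], [3, 4, 6, 10], [4, 5, 9, 12], [5, 7,
   10, 11], [6, 8, 9, 11]], [[0, 1, 7, 12], [0, 2, 5, 10], [0, 3, 6, 8], [0, 4, 9, 11], [1, 2,
   4, 6], [1, 3, 9, 10], [1, 5, 8, 11], [2, 3, 11, 12], [2, 7, 8, 9], [3, 4, 5, 7], [4, 8, 10,
   12], [5, 6, 9, 12], [6, 7, 10, 11]])

/-- Three projective planes of order 3 with one common block: the common blocks and the three sets of
remaining blocks. -/
def k13_1 : List (List ℕ) × List (List ℕ) × List (List ℕ) × List (List ℕ) :=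
  ([[0, 1, 3, 9]], [[0, 2, 8, 12], [0, 4, 5, 7], [0, 6, 10, 11], [1, 2, 4, 10], [1, 5, 6, 8],
   [1, 7, 11, 12], [2, 3, 5, 11], [2, 6, 7, 9], [3, 4, 6, 12], [3, 7, 8, 10], [4, 8, 9, 11], [5,
   9, 10, 12]], [[0, 2, 8, 10], [0, 4, 6, 7], [0, 5, 11, 12], [1, 2, 6, 12], [1, 4, 5, 8], [1,
   7, 10, 11], [2, 3, 4, 11], [2, 5, 7, 9], [3, 5, 6, 10], [3, 7, 8, 12], [4, 9, 10, 12], [6, 8,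
   9, 11]], [[0, 2, 4, 5], [0, 6, 7, 8], [0, 10, 11, 12], [1, 2, 8, 11], [1, 4, 7, 10], [1, 5,
   6, 12], [2, 3, 6, 10], [2, 7, 9, 12], [3, 4, 8, 12], [3, 5, 7, 11], [4, 6, 9, 11], [5, 8, 9,
   10]])

/-- Three projective planes of order 3 with two common blocks: the common blocks and the three sets of
remaining blocks. -/
def k13_2 : List (List ℕ) × List (List ℕ) × List (List ℕ) × List (List ℕ) :=
  ([[0, 2, 8, 12], [0, 6, 10, 11]], [[0, 1, 3, 9], [0, 4, 5, 7], [1, 2, 4, 10], [1, 5, 6, 8],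
   [1, 7, 11, 12], [2, 3, 5, 11], [2, 6, 7, 9], [3, 4, 6, 12], [3, 7, 8, 10], [4, 8, 9, 11], [5,
   9, 10, 12]], [[0, 1, 3, 5], [0, 4, 7, 9], [1, 2, 7, 10], [1, 4, 6, 8], [1, 9, 11, 12], [2, 3,
   4, 11], [2, 5, 6, 9], [3, 6, 7, 12], [3, 8, 9, 10], [4, 5, 10, 12], [5, 7, 8, 11]], [[0, 1,
   3, 7], [0, 4, 5, 9], [1, 2, 4, 6], [1, 5, 10, 12], [1, 8, 9, 11], [2, 3, 9, 10], [2, 5, 7,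
   11], [3, 4, 11, 12], [3, 5, 6, 8], [4, 7, 8, 10], [6, 7, 9, 12]])

/-- Three projective planes of order 3 with three common blocks: the common blocks and the three sets of
remaining blocks. -/
def k13_3 : List (List ℕ) × List (List ℕ) × List (List ℕ) × List (List ℕ) :=
  ([[0, 1, 3, 9], [0, 4, 5, 7], [5, 9, 10, 12]], [[0, 2, 8, 12], [0, 6, 10, 11], [1, 2, 4, 10],
   [1, 5, 6, 8], [1, 7, 11, 12], [2, 3, 5, 11], [2, 6, 7, 9], [3, 4, 6, 12], [3, 7, 8, 10], [4,
   8, 9, 11]], [[0, 2, 11, 12], [0, 6, 8, 10], [1, 2, 7, 10], [1, 4, 8, 12], [1, 5, 6, 11], [2,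
   3, 5, 8], [2, 4, 6, 9], [3, 4, 10, 11], [3, 6, 7, 12], [7, 8, 9, 11]], [[0, 2, 6, 10], [0, 8,
   11, 12], [1, 2, 5, 11], [1, 4, 8, 10], [1, 6, 7, 12], [2, 3, 4, 12], [2, 7, 8, 9], [3, 5, 6,
   8], [3, 7, 10, 11], [4, 6, 9, 11]])

/-- Three projective planes of order 3 with four common blocks: the common blocks and the three sets of
remaining blocks. -/
def k13_4 : List (List ℕ) × List (List ℕ) × List (List ℕ) × List (List ℕ) :=
  ([[0, 2, 8, 12], [0, 6, 10, 11], [1, 2, 4, 10], [1, 5, 6, 8]], [[0, 1, 3, 9], [0, 4, 5, 7],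
   [1, 7, 11, 12], [2, 3, 5, 11], [2, 6, 7, 9], [3, 4, 6, 12], [3, 7, 8, 10], [4, 8, 9, 11], [5,
   9, 10, 12]], [[0, 1, 7, 9], [0, 3, 4, 5], [1, 3, 11, 12], [2, 3, 6, 7], [2, 5, 9, 11], [3, 8,
   9, 10], [4, 6, 9, 12], [4, 7, 8, 11], [5, 7, 10, 12]], [[0, 1, 3, 7], [0, 4, 5, 9], [1, 9,
   11, 12], [2, 3, 6, 9], [2, 5, 7, 11], [3, 4, 8, 11], [3, 5, 10, 12], [4, 6, 7, 12], [7, 8, 9,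
   10]])

/-- Three projective planes of order 3 with five common blocks: the common blocks and the three sets of
remaining blocks. -/
def k13_5 : List (List ℕ) × List (List ℕ) × List (List ℕ) × List (List ℕ) :=
  ([[0, 1, 3, 9], [0, 2, 8, 12], [0, 4, 5, 7], [0, 6, 10, 11], [2, 6, 7, 9]], [[1, 2, 4, 10],
   [1, 5, 6, 8], [1, 7, 11, 12], [2, 3, 5, 11], [3, 4, 6, 12], [3, 7, 8, 10], [4, 8, 9, 11], [5,
   9, 10, 12]], [[1, 2, 5, 11], [1, 4, 6, 8], [1, 7, 10, 12], [2, 3, 4, 10], [3, 5, 6, 12], [3,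
   7, 8, 11], [4, 9, 11, 12], [5, 8, 9, 10]], [[1, 2, 5, 10], [1, 4, 6, 12], [1, 7, 8, 11], [2,
   3, 4, 11], [3, 5, 6, 8], [3, 7, 10, 12], [4, 8, 9, 10], [5, 9, 11, 12]])

/-- Three transversal designs with four groups `{4 g, …, 4 g + 3}` of size 4 and no common block:
the common blocks and the three sets of remaining blocks. -/
def m44_0 : List (List ℕ) × List (List ℕ) × List (List ℕ) × List (List ℕ) :=
  ([], [[0, 4, 8, 12], [0, 5, 10, 13], [0, 6, 11, 14], [0, 7, 9, 15], [1, 4, 11, 13], [1, 5, 9,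
   12], [1, 6, 8, 15], [1, 7, 10, 14], [2, 4, 9, 14], [2, 5, 11, 15], [2, 6, 10, 12], [2, 7, 8,
   13], [3, 4, 10, 15], [3, 5, 8, 14], [3, 6, 9, 13], [3, 7, 11, 12]], [[0, 4, 11, 13], [0, 5,
   9, 14], [0, 6, 10, 12], [0, 7, 8, 15], [1, 4, 9, 15], [1, 5, 11, 12], [1, 6, 8, 14], [1, 7,
   10, 13], [2, 4, 8, 12], [2, 5, 10, 15], [2, 6, 9, 13], [2, 7, 11, 14], [3, 4, 10, 14], [3, 5,
   8, 13], [3, 6, 11, 15], [3, 7, 9, 12]], [[0, 4, 9, 14], [0, 5, 8, 13], [0, 6, 10, 15], [0, 7,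
   11, 12], [1, 4, 10, 13], [1, 5, 11, 14], [1, 6, 9, 12], [1, 7, 8, 15], [2, 4, 11, 15], [2, 5,
   10, 12], [2, 6, 8, 14], [2, 7, 9, 13], [3, 4, 8, 12], [3, 5, 9, 15], [3, 6, 11, 13], [3, 7,
   10, 14]])

/-- Three transversal designs with four groups `{4 g, …, 4 g + 3}` of size 4 and one common block:
the common blocks and the three sets of remaining blocks. -/
def m44_1 : List (List ℕ) × List (List ℕ) × List (List ℕ) × List (List ℕ) :=
  ([[2, 6, 10, 12]], [[0, 4, 8, 12], [0, 5, 10, 13], [0, 6, 11, 14], [0, 7, 9, 15], [1, 4, 11,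
   13], [1, 5, 9, 12], [1, 6, 8, 15], [1, 7, 10, 14], [2, 4, 9, 14], [2, 5, 11, 15], [2, 7, 8,
   13], [3, 4, 10, 15], [3, 5, 8, 14], [3, 6, 9, 13], [3, 7, 11, 12]], [[0, 4, 11, 12], [0, 5,
   10, 15], [0, 6, 8, 13], [0, 7, 9, 14], [1, 4, 10, 14], [1, 5, 11, 13], [1, 6, 9, 15], [1, 7,
   8, 12], [2, 4, 9, 13], [2, 5, 8, 14], [2, 7, 11, 15], [3, 4, 8, 15], [3, 5, 9, 12], [3, 6,
   11, 14], [3, 7, 10, 13]], [[0, 4, 9, 13], [0, 5, 8, 12], [0, 6, 11, 15], [0, 7, 10, 14], [1,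
   4, 10, 15], [1, 5, 11, 14], [1, 6, 8, 13], [1, 7, 9, 12], [2, 4, 8, 14], [2, 5, 9, 15], [2,
   7, 11, 13], [3, 4, 11, 12], [3, 5, 10, 13], [3, 6, 9, 14], [3, 7, 8, 15]])

/-- Three transversal designs with four groups `{4 g, …, 4 g + 3}` of size 4 and two common blocks:
the common blocks and the three sets of remaining blocks. -/
def m44_2 : List (List ℕ) × List (List ℕ) × List (List ℕ) × List (List ℕ) :=
  ([[1, 4, 11, 13], [2, 4, 9, 14]], [[0, 4, 8, 12], [0, 5, 10, 13], [0, 6, 11, 14], [0, 7, 9,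
   15], [1, 5, 9, 12], [1, 6, 8, 15], [1, 7, 10, 14], [2, 5, 11, 15], [2, 6, 10, 12], [2, 7, 8,
   13], [3, 4, 10, 15], [3, 5, 8, 14], [3, 6, 9, 13], [3, 7, 11, 12]], [[0, 4, 10, 12], [0, 5,
   9, 13], [0, 6, 11, 15], [0, 7, 8, 14], [1, 5, 8, 12], [1, 6, 10, 14], [1, 7, 9, 15], [2, 5,
   10, 15], [2, 6, 8, 13], [2, 7, 11, 12], [3, 4, 8, 15], [3, 5, 11, 14], [3, 6, 9, 12], [3, 7,
   10, 13]], [[0, 4, 10, 15], [0, 5, 11, 12], [0, 6, 8, 14], [0, 7, 9, 13], [1, 5, 10, 14], [1,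
   6, 9, 12], [1, 7, 8, 15], [2, 5, 8, 13], [2, 6, 11, 15], [2, 7, 10, 12], [3, 4, 8, 12], [3,
   5, 9, 15], [3, 6, 10, 13], [3, 7, 11, 14]])

/-- A group divisible design with block size 4, with 4 groups of size 3. -/
def gdd4 : List (List ℕ) :=
  [[0, 3, 7, 9], [0, 4, 6, 10], [0, 5, 8, 11], [1, 3, 6, 11], [1, 4, 8, 9], [1, 5, 7, 10], [2,
   3, 8, 10], [2, 4, 7, 11], [2, 5, 6, 9]]

/-- A group divisible design with block size 4, with 5 groups of size 3. -/
def gdd5 : List (List ℕ) :=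
  develop 15 3 5 [[0, 3, 8, 14], [0, 4, 7, 9], [1, 5, 8, 10]]

/-- A group divisible design with block size 4, with 5 groups of size 3 and one of size 6. -/
def gdd7 : List (List ℕ) :=
  [[0, 3, 6, 19], [0, 4, 7, 20], [0, 5, 12, 15], [0, 8, 11, 16], [0, 9, 13, 17], [0, 10, 14,
   18], [1, 3, 10, 15], [1, 4, 13, 18], [1, 5, 11, 19], [1, 6, 14, 17], [1, 7, 12, 16], [1, 8,
   9, 20], [2, 3, 13, 16], [2, 4, 11, 17], [2, 5, 8, 18], [2, 6, 9, 15], [2, 7, 14, 19], [2, 10,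
   12, 20], [3, 7, 9, 18], [3, 8, 12, 17], [3, 11, 14, 20], [4, 6, 10, 16], [4, 8, 14, 15], [4,
   9, 12, 19], [5, 6, 13, 20], [5, 7, 10, 17], [5, 9, 14, 16], [6, 11, 12, 18], [7, 11, 13, 15],
   [8, 10, 13, 19]]

/-- A group divisible design with block size 4, with 8 groups of size 3. -/
def gdd8 : List (List ℕ) :=
  develop 21 3 7 [[0, 3, 15, 19], [0, 5, 13, 21], [0, 7, 14, 23], [0, 8, 11, 17], [0, 10, 20,
   22], [1, 4, 16, 20]]

/-- A group divisible design with block size 4, with 9 groups of size 3. -/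
def gdd9 : List (List ℕ) :=
  develop 27 3 9 [[0, 3, 13, 21], [0, 4, 22, 25], [0, 5, 8, 15], [0, 7, 14, 23], [0, 11, 16,
   26], [1, 5, 13, 26]]

/-- A group divisible design with block size 4, with 8 groups of size 3 and one of size 6. -/
def gdd10 : List (List ℕ) :=
  develop 24 12 2 [[0, 4, 22, 26], [0, 5, 8, 18], [0, 6, 9, 28], [0, 7, 21, 29], [0, 10, 13,
   19], [0, 11, 17, 27], [0, 14, 23, 24], [0, 16, 20, 25], [1, 3, 6, 29], [1, 4, 18, 24], [1, 8,
   9, 27], [1, 10, 14, 28], [1, 11, 20, 26], [1, 15, 21, 25], [1, 16, 19, 23], [2, 3, 8, 16],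
   [2, 4, 6, 27], [2, 5, 20, 29], [2, 9, 15, 23], [2, 10, 18, 25], [2, 17, 21, 26], [3, 7, 18,
   26], [3, 10, 17, 24], [3, 19, 22, 27], [3, 20, 23, 28], [4, 10, 23, 29], [4, 17, 19, 28], [5,
   6, 10, 21], [5, 11, 19, 25], [7, 9, 20, 24]] ++ develop 24 12 1 [[0, 3, 12, 15], [1, 5, 13,
   17], [2, 7, 14, 19], [4, 9, 16, 21], [6, 11, 18, 23], [8, 10, 20, 22]]

/-- A group divisible design with block size 4, with 9 groups of size 3 and one of size 6. -/
def gdd11 : List (List ℕ) :=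
  develop 27 9 3 [[0, 3, 17, 28], [0, 4, 16, 18], [0, 5, 6, 15], [0, 7, 11, 21], [0, 8, 12, 29],
   [0, 10, 20, 27], [0, 14, 19, 31], [0, 22, 24, 32], [0, 23, 26, 30], [1, 3, 10, 15], [1, 4,
   25, 29], [1, 5, 13, 16], [1, 7, 14, 28], [1, 8, 17, 24], [1, 12, 22, 30], [1, 20, 26, 32],
   [2, 3, 11, 14], [2, 4, 17, 22], [2, 6, 13, 28], [2, 7, 26, 31], [2, 15, 23, 29], [2, 16, 24,
   30], [3, 6, 22, 31], [3, 7, 24, 27], [3, 8, 23, 25], [4, 8, 14, 27]] ++ develop 27 9 1 [[3,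
   12, 21, 32], [5, 14, 23, 32], [7, 16, 25, 32]]

/-- A group divisible design with block size 4, with 12 groups of size 3. -/
def gdd12 : List (List ℕ) :=
  develop 33 3 11 [[0, 3, 20, 24], [0, 4, 6, 16], [0, 5, 19, 34], [0, 7, 11, 33], [0, 8, 14,
   15], [0, 13, 22, 28], [0, 23, 25, 35], [1, 4, 17, 26], [1, 8, 11, 29]]

/-- A group divisible design with block size 4, with 13 groups of size 3. -/
def gdd13 : List (List ℕ) :=
  develop 39 3 13 [[0, 3, 16, 20], [0, 4, 9, 33], [0, 5, 12, 31], [0, 7, 23, 25], [0, 8, 26,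
   38], [0, 11, 21, 35], [0, 22, 28, 37], [1, 4, 29, 35], [1, 8, 11, 28]]

/-- A group divisible design with block size 4, with 12 groups of size 3 and one of size 6. -/
def gdd14 : List (List ℕ) :=
  develop 36 6 6 [[0, 3, 23, 33], [0, 4, 7, 10], [0, 5, 6, 22], [0, 8, 27, 38], [0, 9, 19, 25],
   [0, 13, 15, 41], [0, 14, 21, 39], [0, 17, 31, 36], [0, 20, 26, 34], [0, 28, 32, 37], [1, 5,
   11, 26], [1, 8, 20, 33], [1, 9, 16, 28], [1, 10, 17, 38], [1, 15, 29, 37], [1, 22, 35, 39],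
   [2, 3, 28, 36], [2, 4, 35, 40], [2, 5, 29, 33], [2, 11, 22, 41]] ++ develop 36 6 3 [[0, 11,
   18, 29], [1, 14, 19, 32], [3, 16, 21, 34]] ++ develop 36 6 2 [[0, 12, 24, 40], [1, 13, 25,
   40], [3, 15, 27, 40]]

/-- A group divisible design with block size 4, with 13 groups of size 3 and one of size 6. -/
def gdd15 : List (List ℕ) :=
  develop 39 3 13 [[0, 3, 17, 30], [0, 4, 10, 28], [0, 5, 32, 35], [0, 6, 13, 21], [0, 8, 19,
   42], [0, 11, 37, 39], [0, 16, 20, 44], [0, 22, 38, 40], [0, 23, 25, 43], [0, 29, 34, 41], [1,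
   4, 13, 23], [1, 8, 26, 32]]

/-- A group divisible design with block size 4, with 24 groups of size 3 and one of size 6. -/
def gdd26 : List (List ℕ) :=
  develop 72 6 12 [[0, 3, 14, 22], [0, 4, 10, 49], [0, 5, 8, 18], [0, 6, 15, 53], [0, 7, 32,
   48], [0, 11, 61, 64], [0, 12, 29, 51], [0, 13, 67, 69], [0, 16, 30, 65], [0, 19, 43, 50], [0,
   20, 63, 72], [0, 23, 28, 40], [0, 25, 44, 68], [0, 26, 27, 33], [0, 34, 38, 75], [0, 37, 71,
   76], [0, 41, 70, 77], [0, 45, 52, 74], [0, 46, 55, 73], [1, 5, 11, 50], [1, 7, 16, 51], [1,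
   9, 62, 65], [1, 13, 27, 52], [1, 14, 68, 70], [1, 17, 31, 63], [1, 21, 29, 41], [1, 38, 69,
   77], [1, 39, 71, 75], [1, 46, 53, 72], [1, 47, 56, 74], [2, 8, 17, 52], [2, 14, 28, 53], [2,
   15, 32, 64], [2, 22, 27, 39], [2, 40, 69, 76], [2, 47, 51, 73], [3, 16, 34, 64], [3, 17, 27,
   45], [4, 17, 35, 65]] ++ develop 72 6 6 [[0, 21, 36, 57], [1, 22, 37, 58], [2, 23, 38, 59]]

/-- A group divisible design with block size 4, with 25 groups of size 3 and one of size 6. -/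
def gdd27 : List (List ℕ) :=
  develop 75 3 25 [[0, 3, 28, 71], [0, 4, 26, 79], [0, 5, 61, 76], [0, 6, 18, 54], [0, 7, 10,
   35], [0, 8, 16, 42], [0, 9, 32, 47], [0, 11, 37, 70], [0, 13, 30, 64], [0, 14, 24, 44], [0,
   15, 46, 55], [0, 17, 19, 75], [0, 22, 74, 78], [0, 29, 62, 67], [0, 43, 50, 53], [0, 52, 56,
   80], [0, 59, 73, 77], [1, 7, 19, 55], [1, 14, 31, 65], [1, 16, 47, 56], [2, 8, 20, 56]]

/-! ### Sums of sets of numbers -/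

/-- All of `0, …, N` except for `N - 7, …, N - 1` belong to `S`. -/
def Full (S : Set ℕ) (N : ℕ) : Prop := ∀ k, k + 8 ≤ N ∨ k = N → k ∈ S

/-- All of `0, …, N` except possibly for `N - 15`, `N - 14` and `N - 7, …, N - 1` belong to `S`. -/
def AlmostFull (S : Set ℕ) (N : ℕ) : Prop :=
  ∀ k, k + 16 ≤ N ∨ (N ≤ k + 13 ∧ k + 8 ≤ N) ∨ k = N → k ∈ S

theorem AlmostFull.add {S T : Set ℕ} {N : ℕ} (h : AlmostFull S N) (hN : 28 ≤ N)
    (hT : ∀ k, k ≤ 5 ∨ k = 13 → k ∈ T) : AlmostFull (S + T) (N + 13) := by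
  intro k hk
  have hsplit : ∀ a, a ≤ k → (a ≤ 5 ∨ a = 13) → k - a ∈ S → k ∈ S + T := fun a hak ha hs =>
    Set.mem_add.2 ⟨k - a, hs, a, hT a ha, by omega⟩
  by_cases h1 : k + 16 ≤ N
  · exact hsplit 0 (by omega) (by omega) (h _ (by omega))
  by_cases h2 : k + 3 ≤ N
  · exact hsplit 13 (by omega) (by omega) (h _ (by omega))
  by_cases h3 : k ≤ N + 5
  · exact hsplit (k - N) (by omega) (by omega) (h _ (by omega))
  · exact hsplit 13 (by omega) (by omega) (h _ (by omega))

theorem AlmostFull_three {R S T : Set ℕ} (hR : ∀ k, k ≤ 5 ∨ k = 13 → k ∈ R)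
    (hS : ∀ k, k ≤ 5 ∨ k = 13 → k ∈ S) (hT : ∀ k, k ≤ 5 ∨ k = 13 → k ∈ T) :
    AlmostFull (R + S + T) 39 := by
  have h2 : ∀ k, k ≤ 10 ∨ (13 ≤ k ∧ k ≤ 18) ∨ k = 26 → k ∈ R + S := by
    intro k hk
    have hsplit : ∀ a, a ≤ k → (a ≤ 5 ∨ a = 13) → (k - a ≤ 5 ∨ k - a = 13) → k ∈ R + S :=
      fun a hak ha hs => Set.mem_add.2 ⟨k - a, hR _ hs, a, hS a ha, by omega⟩
    by_cases h1 : k ≤ 5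
    · exact hsplit 0 (by omega) (by omega) (by omega)
    by_cases h1 : k ≤ 10
    · exact hsplit 5 (by omega) (by omega) (by omega)
    · exact hsplit 13 (by omega) (by omega) (by omega)
  intro k hk
  have hsplit : ∀ a, a ≤ k → (a ≤ 5 ∨ a = 13) →
      (k - a ≤ 10 ∨ (13 ≤ k - a ∧ k - a ≤ 18) ∨ k - a = 26) → k ∈ R + S + T :=
    fun a hak ha hs => Set.mem_add.2 ⟨k - a, h2 _ hs, a, hT a ha, by omega⟩
  by_cases h1 : k ≤ 10
  · exact hsplit 0 (by omega) (by omega) (by omega)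
  by_cases h1 : k ≤ 12
  · exact hsplit 5 (by omega) (by omega) (by omega)
  by_cases h1 : k ≤ 18
  · exact hsplit 0 (by omega) (by omega) (by omega)
  by_cases h1 : k ≤ 23
  · exact hsplit 5 (by omega) (by omega) (by omega)
  · exact hsplit 13 (by omega) (by omega) (by omega)

theorem AlmostFull_sum (f : ℕ → Set ℕ) (q : ℕ) (hq : 3 ≤ q)
    (hf : ∀ i < q, ∀ k, k ≤ 5 ∨ k = 13 → k ∈ f i) :
    AlmostFull (∑ i ∈ Finset.range q, f i) (13 * q) := by
  induction q, hq using Nat.le_induction with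
  | base =>
    simp only [Finset.sum_range_succ, Finset.sum_range_zero, zero_add]
    exact AlmostFull_three (hf 0 (by omega)) (hf 1 (by omega)) (hf 2 (by omega))
  | succ q hq ih =>
    rw [Finset.sum_range_succ, mul_add, mul_one]
    exact (ih fun i hi => hf i (by omega)).add (by omega) (hf q (by omega))

/-- One summand containing `0, 1, 2, 16` closes the remaining gap. -/
theorem AlmostFull.full_add {S T : Set ℕ} {N : ℕ} (h : AlmostFull S N) (hN : 21 ≤ N)
    (hT : ∀ k, k ≤ 2 ∨ k = 16 → k ∈ T) : Full (S + T) (N + 16) := by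
  intro k hk
  have hsplit : ∀ a, a ≤ k → (a ≤ 2 ∨ a = 16) → k - a ∈ S → k ∈ S + T := fun a hak ha hs =>
    Set.mem_add.2 ⟨k - a, hs, a, hT a ha, by omega⟩
  by_cases h1 : k + 16 ≤ N
  · exact hsplit 0 (by omega) (by omega) (h _ (by omega))
  by_cases h2 : k + 14 ≤ N
  · exact hsplit 2 (by omega) (by omega) (h _ (by omega))
  by_cases h3 : k + 8 ≤ N
  · exact hsplit 0 (by omega) (by omega) (h _ (by omega))
  by_cases h4 : k + 6 ≤ N
  · exact hsplit 2 (by omega) (by omega) (h _ (by omega))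
  by_cases h5 : k ≤ N
  · exact hsplit 16 (by omega) (by omega) (h _ (by omega))
  by_cases h6 : k ≤ N + 2
  · exact hsplit (k - N) (by omega) (by omega) (h _ (by omega))
  · exact hsplit 16 (by omega) (by omega) (h _ (by omega))

theorem Full.add_pair {S T : Set ℕ} {N c : ℕ} (h : Full S N) (hc : c + 7 ≤ N) (h0 : 0 ∈ T)
    (h1 : c ∈ T) : Full (S + T) (N + c) := by
  intro k hk
  by_cases hk' : k + 8 ≤ N
  · exact Set.mem_add.2 ⟨k, h _ (by omega), 0, h0, by omega⟩
  · exact Set.mem_add.2 ⟨k - c, h _ (by omega), c, h1, by omega⟩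

theorem Full.add_sum {ι : Type} {S : Set ℕ} {N : ℕ} (c : ι → ℕ) (h : Full S N) (s : Finset ι)
    (f : ι → Set ℕ) (hc : ∀ i ∈ s, c i + 7 ≤ N) (hf : ∀ i ∈ s, 0 ∈ f i ∧ c i ∈ f i) :
    Full (S + ∑ i ∈ s, f i) (N + ∑ i ∈ s, c i) := by
  classical
  induction s using Finset.induction_on with
  | empty => simpa using h
  | insert a s ha ih =>
    have h1 := ih (fun i hi => hc i (by simp [hi])) (fun i hi => hf i (by simp [hi]))
    have h2 := hc a (by simp)
    have h3 := hf a (by simp)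
    rw [Finset.sum_insert ha, Finset.sum_insert ha, add_comm (f a), add_comm (c a), ← add_assoc,
      ← add_assoc]
    exact h1.add_pair (by omega) h3.1 h3.2

theorem Full.add_full {S T : Set ℕ} {N M : ℕ} (hS : Full S N) (hT : Full T M) (hN : 15 ≤ N)
    (hM : 15 ≤ M) : Full (S + T) (N + M) := by
  intro k hk
  by_cases h1 : k + 8 ≤ N
  · exact Set.mem_add.2 ⟨k, hS _ (by omega), 0, hT _ (by omega), by omega⟩
  by_cases h2 : k + 8 ≤ N + (M - 8)
  · exact Set.mem_add.2 ⟨N - 8, hS _ (by omega), k - (N - 8), hT _ (by omega), by omega⟩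
  · by_cases h3 : k < N + M
    · exact Set.mem_add.2 ⟨N, hS _ (by omega), k - N, hT _ (by omega), by omega⟩
    · exact Set.mem_add.2 ⟨N, hS _ (by omega), M, hT _ (by omega), by omega⟩

/-! ### Verification of the explicit designs -/

theorem Spec_id_subset_J (N : ℕ) : Spec (groupGraph fun x : Fin N => id x.1) ⊆ J N :=
  Spec_equiv _ _ (Equiv.refl _) fun x y => by simp [Fin.ext_iff]

set_option maxRecDepth 100000 in
theorem J13 : ∀ k, k ≤ 5 ∨ k = 13 → k ∈ J 13 := by
  have h0 := checkTriple_spec (m := 4) (N := 13) (grp := id) (C := k13_0.1) (T₀ := k13_0.2.1)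
    (T₁ := k13_0.2.2.1) (T₂ := k13_0.2.2.2) (by decide +kernel)
  have h1 := checkTriple_spec (m := 4) (N := 13) (grp := id) (C := k13_1.1) (T₀ := k13_1.2.1)
    (T₁ := k13_1.2.2.1) (T₂ := k13_1.2.2.2) (by decide +kernel)
  have h2 := checkTriple_spec (m := 4) (N := 13) (grp := id) (C := k13_2.1) (T₀ := k13_2.2.1)
    (T₁ := k13_2.2.2.1) (T₂ := k13_2.2.2.2) (by decide +kernel)
  have h3 := checkTriple_spec (m := 4) (N := 13) (grp := id) (C := k13_3.1) (T₀ := k13_3.2.1)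
    (T₁ := k13_3.2.2.1) (T₂ := k13_3.2.2.2) (by decide +kernel)
  have h4 := checkTriple_spec (m := 4) (N := 13) (grp := id) (C := k13_4.1) (T₀ := k13_4.2.1)
    (T₁ := k13_4.2.2.1) (T₂ := k13_4.2.2.2) (by decide +kernel)
  have h5 := checkTriple_spec (m := 4) (N := 13) (grp := id) (C := k13_5.1) (T₀ := k13_5.2.1)
    (T₁ := k13_5.2.2.1) (T₂ := k13_5.2.2.2) (by decide +kernel)
  intro k hk
  apply Spec_id_subset_J
  have : k = 0 ∨ k = 1 ∨ k = 2 ∨ k = 3 ∨ k = 4 ∨ k = 5 ∨ k = 13 := by omega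
  rcases this with rfl | rfl | rfl | rfl | rfl | rfl | rfl
  exacts [h0.1, h1.1, h2.1, h3.1, h4.1, h5.1, h0.2]

theorem M44 : ∀ k, k ≤ 2 ∨ k = 16 → k ∈ M 4 4 := by
  have h0 := checkTriple_spec (m := 4) (N := 16) (grp := (· / 4)) (C := m44_0.1) (T₀ := m44_0.2.1)
    (T₁ := m44_0.2.2.1) (T₂ := m44_0.2.2.2) (by decide +kernel)
  have h1 := checkTriple_spec (m := 4) (N := 16) (grp := (· / 4)) (C := m44_1.1) (T₀ := m44_1.2.1)
    (T₁ := m44_1.2.2.1) (T₂ := m44_1.2.2.2) (by decide +kernel)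
  have h2 := checkTriple_spec (m := 4) (N := 16) (grp := (· / 4)) (C := m44_2.1) (T₀ := m44_2.2.1)
    (T₁ := m44_2.2.2.1) (T₂ := m44_2.2.2.2) (by decide +kernel)
  intro k hk
  have hsub : Spec (groupGraph fun x : Fin 16 => (x : ℕ) / 4) ⊆ M 4 4 :=
    Spec_equiv _ _ (finProdFinEquiv (m := 4) (n := 4)).symm (by
      intro x y
      simp only [SimpleGraph.comap_adj, SimpleGraph.top_adj, ne_eq, finProdFinEquiv,
        Equiv.symm_mk, Equiv.coe_fn_mk, Fin.ext_iff, Fin.coe_divNat])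
  have : k = 0 ∨ k = 1 ∨ k = 2 ∨ k = 16 := by omega
  rcases this with rfl | rfl | rfl | rfl
  exacts [hsub h0.1, hsub h1.1, hsub h2.1, hsub h0.2]

/-- The extreme values `0` and `w (12 w + 1)`, the total number of blocks, lie in `J (12 w + 1)`. -/
def Extremes (w : ℕ) : Prop := 0 ∈ J (12 * w + 1) ∧ w * (12 * w + 1) ∈ J (12 * w + 1)

theorem Extremes_of_check (m w : ℕ) {T₀ T₁ T₂ : List (List ℕ)}
    (h : checkTriple m (12 * w + 1) id [] T₀ T₁ T₂ = true)
    (hl : T₀.length = w * (12 * w + 1)) : Extremes w := by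
  have h' := checkTriple_spec h
  refine ⟨Spec_id_subset_J _ h'.1, Spec_id_subset_J _ ?_⟩
  rw [← hl]
  exact h'.2

theorem Extremes_zero : Extremes 0 := by
  have h : IsDec (⊤ : SimpleGraph (Fin 1)) ∅ :=
    ⟨⟨by simp, fun x y h => absurd (Subsingleton.elim x y) h.ne⟩, by simp⟩
  exact ⟨h.card_mem, h.card_mem⟩

theorem Extremes_one : Extremes 1 := ⟨J13 0 (by omega), J13 13 (by omega)⟩

set_option maxRecDepth 100000 in
theorem Extremes_two : Extremes 2 :=
  Extremes_of_check 4 2 (T₀ := k25a) (T₁ := k25b) (T₂ := k25c) (by decide +kernel) (by decide +kernel)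

set_option maxRecDepth 100000 in
theorem Extremes_three : Extremes 3 :=
  Extremes_of_check 4 3 (T₀ := k37a) (T₁ := k37b) (T₂ := k37c) (by decide +kernel) (by decide +kernel)

set_option maxRecDepth 100000 in
theorem Extremes_six : Extremes 6 :=
  Extremes_of_check 3 6 (T₀ := k73a) (T₁ := k73b) (T₂ := k73c) (by decide +kernel) (by decide +kernel)

/-! ### Small orders and the first ingredients -/

/-- The assertion that all admissible numbers of common blocks occur for order `12 u + 1`. -/
def Good (u : ℕ) : Prop := Full (J (12 * u + 1)) (u * (12 * u + 1))

theorem Good.extremes {u : ℕ} (h : Good u) (hu : 1 ≤ u) : Extremes u := by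
  refine ⟨h 0 (Or.inl ?_), h _ (Or.inr rfl)⟩
  nlinarith

/-- Whether `L` is the list of blocks of a group divisible design with block size 4, with
`q` groups `{3 g, 3 g + 1, 3 g + 2}` of size 3 and one group of size `3 r`, whose number of blocks
is the one needed for order `12 (q + r) + 1`. -/
def checkGDD (q r : ℕ) (L : List (List ℕ)) : Bool :=
  check (3 * (q + r)) (fun x => min (x / 3) q) L && (L.all fun b => b.length == 4) &&
  distinctB 3 (3 * (q + r)) L &&
  13 * q + r * (12 * r + 1) + 16 * L.length == (q + r) * (12 * (q + r) + 1)

/-- Multiplying all points of a group divisible design by 4 and filling in the groups with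
`S(2,4,13)` designs (and one with an `S(2,4,12 r + 1)`). The `q ≥ 3` groups of size 3 provide
almost all numbers, one block provides the missing ones, and the other blocks provide `0` or `16`
each. -/
theorem Good_of_GDD {q r : ℕ} {L : List (List ℕ)} (hL : checkGDD q r L = true) (hq : 3 ≤ q)
    (hr : Extremes r) (hqr : r * (12 * r + 1) ≤ 13 * q + 9) : Good (q + r) := by
  classical
  simp only [checkGDD, Bool.and_eq_true, beq_iff_eq] at hL
  obtain ⟨⟨⟨hc, h4⟩, hd⟩, hcount⟩ := hL
  have hdec := check_dec hc h4
  have hcard := card_toBlocks (check_blocks hc) (distinctB_spec hd)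
  set B := toBlocks (3 * (q + r)) L with hB
  let grp : Fin (3 * (q + r)) → Fin (q + 1) := fun x => ⟨min (x / 3) q, by omega⟩
  have hgraph : groupGraph grp = groupGraph fun x : Fin (3 * (q + r)) => min (x.1 / 3) q := by
    ext x y
    simp [grp]
  have hgrp : ∀ g : Fin (q + 1), (Finset.univ.filter fun x => grp x = g).card =
      if g.1 < q then 3 else 3 * r := by
    intro g
    have hg := g.2
    have : (Finset.univ.filter fun x => grp x = g).card =
        (Finset.Ico (3 * g.1) (if g.1 < q then 3 * g.1 + 3 else 3 * (q + r))).card := by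
      refine Finset.card_bij (fun x _ => x.1) ?_ ?_ ?_
      · intro x hx
        have hx2 := x.2
        simp only [Finset.mem_filter, Finset.mem_univ, true_and, grp, Fin.ext_iff] at hx
        rw [Finset.mem_Ico]
        split_ifs <;> omega
      · intro x _ y _ h
        exact Fin.ext h
      · intro x hx
        rw [Finset.mem_Ico] at hx
        refine ⟨⟨x, by split_ifs at hx <;> omega⟩, ?_, rfl⟩
        simp only [Finset.mem_filter, Finset.mem_univ, true_and, grp, Fin.ext_iff]
        split_ifs at hx <;> omega
    rw [this, Nat.card_Ico]
    split_ifs <;> omega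
  have h1 := fill_groups grp 4
  rw [hgraph] at h1
  have h2 : ∑ g ∈ Finset.range q, J 13 + J (12 * r + 1) + ∑ b ∈ B, M 4 4 ⊆
      J (12 * (q + r) + 1) := by
    have e1 : ∑ g : Fin (q + 1), J (4 * (Finset.univ.filter fun x => grp x = g).card + 1) =
        ∑ g ∈ Finset.range q, J 13 + J (12 * r + 1) := by
      simp only [hgrp]
      rw [Fin.sum_univ_castSucc]
      congr 1
      · simp
      · simp only [Fin.val_last, lt_irrefl, if_false]
        congr 1
        ring
    have e2 : ∑ b ∈ B, M 4 4 = ∑ b ∈ B, M b.card 4 :=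
      Finset.sum_congr rfl fun b hb => by rw [hdec.card b hb]
    have e3 : 4 * Fintype.card (Fin (3 * (q + r))) + 1 = 12 * (q + r) + 1 := by
      rw [Fintype.card_fin]
      ring
    rw [e1, e3] at h1
    rw [e2]
    exact (Set.add_subset_add_left (blowUp_sum _ _ hdec.toIsDecomp 4)).trans h1
  have hne : B.Nonempty := by
    rw [Finset.nonempty_iff_ne_empty]
    intro h0
    rw [h0, Finset.card_empty] at hcard
    rw [← hcard] at hcount
    have : 0 < r ∨ r = 0 := by omega
    rcases this with h | rfl <;> nlinarith
  obtain ⟨b₀, hb₀⟩ := hne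
  have h3 := (AlmostFull_sum (fun _ => J 13) q hq fun _ _ => J13).full_add (by omega) M44
  have h5 := (h3.add_pair (by omega) hr.1 hr.2).add_sum (fun _ => 16) (B.erase b₀)
    (fun _ => M 4 4) (fun _ _ => by omega)
    (fun _ _ => ⟨M44 0 (by omega), M44 16 (by omega)⟩)
  have hset : ∑ g ∈ Finset.range q, J 13 + M 4 4 + J (12 * r + 1) + ∑ b ∈ B.erase b₀, M 4 4 =
      ∑ g ∈ Finset.range q, J 13 + J (12 * r + 1) + ∑ b ∈ B, M 4 4 := by
    rw [← Finset.add_sum_erase _ _ hb₀]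
    abel
  have hnum : 13 * q + 16 + r * (12 * r + 1) + ∑ b ∈ B.erase b₀, 16 =
      (q + r) * (12 * (q + r) + 1) := by
    rw [← hcount, ← hcard, Finset.sum_const, Finset.card_erase_of_mem hb₀, smul_eq_mul]
    have : 0 < B.card := Finset.card_pos.2 ⟨b₀, hb₀⟩
    omega
  rw [hset, hnum] at h5
  exact fun k hk => h2 (h5 k hk)

set_option maxRecDepth 100000 in
theorem Good_base : ∀ u ∈ [4, 5, 7, 8, 9, 10, 11, 12, 13, 14, 15, 26, 27], Good u := by
  have h4 : Good (3 + 1) :=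
    Good_of_GDD (L := gdd4) (by decide +kernel) (by omega) Extremes_one (by omega)
  have h5 : Good (4 + 1) :=
    Good_of_GDD (L := gdd5) (by decide +kernel) (by omega) Extremes_one (by omega)
  have h7 : Good (5 + 2) :=
    Good_of_GDD (L := gdd7) (by decide +kernel) (by omega) Extremes_two (by omega)
  have h8 : Good (7 + 1) :=
    Good_of_GDD (L := gdd8) (by decide +kernel) (by omega) Extremes_one (by omega)
  have h9 : Good (8 + 1) :=
    Good_of_GDD (L := gdd9) (by decide +kernel) (by omega) Extremes_one (by omega)
  have h10 : Good (8 + 2) :=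
    Good_of_GDD (L := gdd10) (by decide +kernel) (by omega) Extremes_two (by omega)
  have h11 : Good (9 + 2) :=
    Good_of_GDD (L := gdd11) (by decide +kernel) (by omega) Extremes_two (by omega)
  have h12 : Good (11 + 1) :=
    Good_of_GDD (L := gdd12) (by decide +kernel) (by omega) Extremes_one (by omega)
  have h13 : Good (12 + 1) :=
    Good_of_GDD (L := gdd13) (by decide +kernel) (by omega) Extremes_one (by omega)
  have h14 : Good (12 + 2) :=
    Good_of_GDD (L := gdd14) (by decide +kernel) (by omega) Extremes_two (by omega)
  have h15 : Good (13 + 2) :=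
    Good_of_GDD (L := gdd15) (by decide +kernel) (by omega) Extremes_two (by omega)
  have h26 : Good (24 + 2) :=
    Good_of_GDD (L := gdd26) (by decide +kernel) (by omega) Extremes_two (by omega)
  have h27 : Good (25 + 2) :=
    Good_of_GDD (L := gdd27) (by decide +kernel) (by omega) Extremes_two (by omega)
  simp only [List.forall_mem_cons, List.not_mem_nil, false_imp_iff, implies_true, and_true]
  exact ⟨h4, h5, h7, h8, h9, h10, h11, h12, h13, h14, h15, h26, h27⟩

/-- If a group divisible design with `k` groups of size 3 is blown up by 4, the result
is a decomposition of the complete `k`-partite graph with parts of size 12. -/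
theorem M_twelve {k : ℕ} {L : List (List ℕ)} (hc : check (3 * k) (· / 3) L = true)
    (h4 : (L.all fun b => b.length == 4) = true) (hd : distinctB 3 (3 * k) L = true) :
    0 ∈ M k 12 ∧ 16 * L.length ∈ M k 12 := by
  have hdec := check_dec hc h4
  have hcard := card_toBlocks (check_blocks hc) (distinctB_spec hd)
  have h1 := blowUp_sum _ _ hdec.toIsDecomp 4
  have h2 : Spec (blowUp (groupGraph fun x : Fin (3 * k) => x.1 / 3) 4) ⊆ M k 12 := by
    let e : Fin (3 * k) × Fin 4 ≃ Fin k × Fin 12 :=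
      (((finCongr (mul_comm 3 k)).trans finProdFinEquiv.symm).prodCongr (Equiv.refl _)).trans
        ((Equiv.prodAssoc _ _ _).trans ((Equiv.refl _).prodCongr finProdFinEquiv))
    have he : ∀ x, ((e x).1 : ℕ) = x.1.1 / 3 := fun x => rfl
    exact Spec_equiv _ _ e fun x y => by
      simp only [SimpleGraph.comap_adj, SimpleGraph.top_adj, ne_eq, Fin.ext_iff, he]
  refine ⟨h2 (h1 ?_), h2 (h1 ?_)⟩
  · refine (Set.mem_finsetSum _ _ _).2 ⟨fun _ => 0, fun {b} hb => ?_, by simp⟩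
    rw [hdec.card b hb]
    exact M44 0 (by omega)
  · refine (Set.mem_finsetSum _ _ _).2 ⟨fun _ => 16, fun {b} hb => ?_, ?_⟩
    · rw [hdec.card b hb]
      exact M44 16 (by omega)
    · rw [Finset.sum_const, hcard, smul_eq_mul, mul_comm]

theorem M_four_twelve : 0 ∈ M 4 12 ∧ 144 ∈ M 4 12 :=
  M_twelve (L := gdd4) (by decide +kernel) (by decide +kernel) (by decide +kernel)

theorem M_five_twelve : 0 ∈ M 5 12 ∧ 240 ∈ M 5 12 :=
  M_twelve (L := gdd5) (by decide +kernel) (by decide +kernel) (by decide +kernel)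

/-! ### Recursion by truncated transversal designs -/

/-- The block with index `(a, b)` of a truncated transversal design over the ring `R`: it consists
of the points `(i, a + cᵢ b)` of the first four groups, and of `b` if this is a point of the
truncated group `W`. -/
def tdBlock {R : Type} [CommRing R] [DecidableEq R] (c : Fin 4 → R) (W : Finset R) (p : R × R) :
    Finset ((Fin 4 × R) ⊕ W) :=
  (Finset.univ.map ⟨fun i => (i, p.1 + c i * p.2), fun _ _ h => (Prod.ext_iff.1 h).1⟩).disjSum
    (Finset.univ.filter fun w : W => w.1 = p.2)

/-- The group of a point of the truncated transversal design, `none` being the truncated group. -/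
def tdGroup {R : Type} (W : Finset R) : (Fin 4 × R) ⊕ W → Option (Fin 4)
  | Sum.inl x => some x.1
  | Sum.inr _ => none

theorem card_tdGroup {R : Type} [Fintype R] (W : Finset R) (g : Option (Fin 4)) :
    (Finset.univ.filter fun x => tdGroup W x = g).card =
      g.elim W.card fun _ => Fintype.card R := by
  rw [Finset.card_filter, Fintype.sum_sum_type, Fintype.sum_prod_type]
  rcases g with _ | g <;> simp [tdGroup]

section TD

variable {R : Type} [CommRing R] [DecidableEq R] (c : Fin 4 → R) (W : Finset R)

theorem inl_mem_tdBlock (p : R × R) (i : Fin 4) (x : R) :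
    Sum.inl (i, x) ∈ tdBlock c W p ↔ p.1 + c i * p.2 = x := by
  rw [tdBlock, Finset.inl_mem_disjSum, Finset.mem_map]
  constructor
  · rintro ⟨j, -, h⟩
    obtain ⟨rfl, h2⟩ := Prod.mk.inj h
    exact h2
  · rintro rfl
    exact ⟨i, Finset.mem_univ i, rfl⟩

theorem inr_mem_tdBlock (p : R × R) (w : W) : Sum.inr w ∈ tdBlock c W p ↔ w.1 = p.2 := by
  simp [tdBlock]

theorem card_tdBlock (p : R × R) : (tdBlock c W p).card = if p.2 ∈ W then 5 else 4 := by
  have h : (Finset.univ.filter fun w : W => w.1 = p.2).card = if p.2 ∈ W then 1 else 0 := by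
    split_ifs with h
    · rw [Finset.card_eq_one]
      exact ⟨⟨p.2, h⟩, by ext w; simp [Subtype.ext_iff]⟩
    · rw [Finset.card_eq_zero, Finset.filter_eq_empty_iff]
      rintro w - e
      exact h (e ▸ w.2)
  rw [tdBlock, Finset.card_disjSum, h, Finset.card_map, Finset.card_univ, Fintype.card_fin]
  split_ifs <;> rfl

/-- Two points of different groups lie in exactly one block. -/
theorem tdBlock_unique (hc : ∀ i j, i ≠ j → IsUnit (c i - c j)) (x y : (Fin 4 × R) ⊕ W)
    (h : tdGroup W x ≠ tdGroup W y) : ∃! p, x ∈ tdBlock c W p ∧ y ∈ tdBlock c W p := by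
  rcases x with ⟨i, x⟩ | w <;> rcases y with ⟨j, y⟩ | w'
  · have hij : i ≠ j := fun e => h (by rw [e]; rfl)
    obtain ⟨t, ht⟩ := hc i j hij
    have hinv : (c i - c j) * (↑t⁻¹ : R) = 1 := by rw [← ht, Units.mul_inv]
    refine ⟨(x - c i * (↑t⁻¹ * (x - y)), ↑t⁻¹ * (x - y)), ?_, ?_⟩
    · simp only [inl_mem_tdBlock]
      constructor
      · ring
      · linear_combination (y - x) * hinv
    · rintro ⟨a, b⟩ hab
      simp only [inl_mem_tdBlock] at hab
      have hb : b = ↑t⁻¹ * (x - y) := by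
        linear_combination (-b) * hinv + ↑t⁻¹ * (hab.1 - hab.2)
      rw [Prod.mk.injEq]
      refine ⟨?_, hb⟩
      rw [← hb]
      linear_combination hab.1
  · refine ⟨(x - c i * w'.1, w'.1), ?_, ?_⟩
    · simp [inl_mem_tdBlock, inr_mem_tdBlock]
    · rintro ⟨a, b⟩ hab
      simp only [inl_mem_tdBlock, inr_mem_tdBlock] at hab
      rw [Prod.mk.injEq, hab.2]
      exact ⟨by linear_combination hab.1, rfl⟩
  · refine ⟨(y - c j * w.1, w.1), ?_, ?_⟩
    · simp [inl_mem_tdBlock, inr_mem_tdBlock]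
    · rintro ⟨a, b⟩ hab
      simp only [inl_mem_tdBlock, inr_mem_tdBlock] at hab
      rw [Prod.mk.injEq, hab.1]
      exact ⟨by linear_combination hab.2, rfl⟩
  · exact absurd rfl h

theorem tdBlock_injective (hc : ∀ i j, i ≠ j → IsUnit (c i - c j)) :
    Function.Injective (tdBlock c W) := by
  intro p q hpq
  have h := tdBlock_unique c W hc (Sum.inl (0, p.1 + c 0 * p.2)) (Sum.inl (1, p.1 + c 1 * p.2))
    (by simp [tdGroup])
  have hmem : ∀ i, Sum.inl (i, p.1 + c i * p.2) ∈ tdBlock c W p := fun i =>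
    (inl_mem_tdBlock c W p i _).2 rfl
  exact h.unique ⟨hmem 0, hmem 1⟩ ⟨hpq ▸ hmem 0, hpq ▸ hmem 1⟩

theorem tdBlock_decomp [Fintype R] (hc : ∀ i j, i ≠ j → IsUnit (c i - c j)) :
    IsDecomp (groupGraph (tdGroup W)) (Finset.univ.image (tdBlock c W)) := by
  constructor
  · intro b hb x hx y hy hxy hg
    obtain ⟨p, -, rfl⟩ := Finset.mem_image.1 hb
    apply hxy
    rcases x with ⟨i, x⟩ | w <;> rcases y with ⟨j, y⟩ | w'
    · rw [inl_mem_tdBlock] at hx hy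
      have : i = j := by simpa [tdGroup] using hg
      subst this
      rw [← hx, ← hy]
    · simp [tdGroup] at hg
    · simp [tdGroup] at hg
    · rw [inr_mem_tdBlock] at hx hy
      rw [Subtype.ext (hx.trans hy.symm)]
  · intro x y hxy
    obtain ⟨p, hp, hu⟩ := tdBlock_unique c W hc x y hxy
    refine ⟨tdBlock c W p, ⟨Finset.mem_image_of_mem _ (Finset.mem_univ p), hp⟩, ?_⟩
    rintro b ⟨hb, hxb⟩
    obtain ⟨q, -, rfl⟩ := Finset.mem_image.1 hb
    rw [hu q hxb]

/-- Recursion step: blow up a truncated transversal design by 12 and fill in the groups. -/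
theorem Good_td [Fintype R] (hc : ∀ i j, i ≠ j → IsUnit (c i - c j)) {m w : ℕ}
    (hR : Fintype.card R = m) (hw : w ≤ m) (hm4 : 4 ≤ m) (hm : Good m) (hD : Extremes w) :
    Good (4 * m + w) := by
  obtain ⟨W, -, hW⟩ := Finset.exists_subset_card_eq
    (show w ≤ (Finset.univ : Finset R).card by rwa [Finset.card_univ, hR])
  have h1 := fill_groups (tdGroup W) 12
  have h2 := blowUp_sum _ _ (tdBlock_decomp c W hc) 12
  rw [Finset.sum_image fun p _ q _ h => tdBlock_injective c W hc h] at h2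
  simp only [card_tdGroup, Fintype.sum_option, Option.elim, hW, hR, Finset.sum_const,
    Finset.card_univ, Fintype.card_fin] at h1
  have e3 : 12 * Fintype.card ((Fin 4 × R) ⊕ W) + 1 = 12 * (4 * m + w) + 1 := by
    simp [hR, hW]
  rw [e3] at h1
  have hmm : 15 ≤ m * (12 * m + 1) := by nlinarith
  have f2 := hm.add_full hm hmm hmm
  have f4 := f2.add_full f2 (by omega) (by omega)
  have hww : w * (12 * w + 1) ≤ m * (12 * m + 1) := by gcongr
  have f5 := f4.add_pair (by omega) hD.1 hD.2
  have f6 := f5.add_sum (fun p : R × R => if p.2 ∈ W then 240 else 144) Finset.univ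
    (fun p => M (tdBlock c W p).card 12)
    (fun p _ => by
      have : 784 ≤ 4 * (m * (12 * m + 1)) := by nlinarith
      split_ifs <;> omega)
    (fun p _ => by
      rw [card_tdBlock]
      split_ifs
      exacts [M_five_twelve, M_four_twelve])
  have hnum : ∑ p : R × R, (if p.2 ∈ W then 240 else 144) = 144 * m * m + 96 * m * w := by
    have : ∀ p : R × R, (if p.2 ∈ W then 240 else 144) = 144 + if p.2 ∈ W then 96 else 0 := by
      intro p
      split_ifs <;> rfl
    simp only [this, Fintype.sum_prod_type, Finset.sum_add_distrib]
    simp [hR, hW]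
    ring
  rw [hnum] at f6
  intro k hk
  refine h1 (Set.add_subset_add_left h2 ?_)
  have hset : J (12 * w + 1) + 4 • J (12 * m + 1) =
      J (12 * m + 1) + J (12 * m + 1) + (J (12 * m + 1) + J (12 * m + 1)) + J (12 * w + 1) := by
    abel
  rw [hset]
  refine f6 k ?_
  have : m * (12 * m + 1) + m * (12 * m + 1) + (m * (12 * m + 1) + m * (12 * m + 1)) +
      w * (12 * w + 1) + (144 * m * m + 96 * m * w) =
      (4 * m + w) * (12 * (4 * m + w) + 1) := by ring
  rw [this]
  exact hk

end TD

theorem Good_field (F : Type) [Field F] [Fintype F] {m w : ℕ} (hF : Fintype.card F = m)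
    (hw : w ≤ m) (hm4 : 4 ≤ m) (hm : Good m) (hD : Extremes w) : Good (4 * m + w) := by
  classical
  obtain ⟨c⟩ : Nonempty (Fin 4 ↪ F) :=
    Function.Embedding.nonempty_of_card_le (by rw [Fintype.card_fin, hF]; exact hm4)
  exact Good_td c (fun i j hij => (sub_ne_zero.2 (c.injective.ne hij)).isUnit) hF hw hm4 hm hD

theorem Good_prime_pow (p n : ℕ) (hp : p.Prime) (hn : n ≠ 0) {w : ℕ} (hw : w ≤ p ^ n)
    (h4 : 4 ≤ p ^ n) (hm : Good (p ^ n)) (hD : Extremes w) : Good (4 * p ^ n + w) := by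
  have : Fact p.Prime := ⟨hp⟩
  have := Fintype.ofFinite (GaloisField p n)
  exact Good_field (GaloisField p n) (by rw [← Nat.card_eq_fintype_card, GaloisField.card p n hn])
    hw h4 hm hD

/-- If `m` is prime to 6, then `0, 1, 2, 3` have invertible differences modulo `m`. -/
theorem Good_zmod {m w : ℕ} (h2 : m % 2 = 1) (h3 : m % 3 ≠ 0) (hw : w ≤ m) (hm4 : 4 ≤ m)
    (hm : Good m) (hD : Extremes w) : Good (4 * m + w) := by
  have : NeZero m := ⟨by omega⟩
  have hlt : ∀ i j : Fin 4, i < j → IsUnit (((i : ℕ) : ZMod m) - ((j : ℕ) : ZMod m)) := by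
    intro i j hij
    have hij' : i.1 < j.1 := hij
    have hj := j.2
    have hcop : Nat.Coprime (j.1 - i.1) m := by
      have : j.1 - i.1 = 1 ∨ j.1 - i.1 = 2 ∨ j.1 - i.1 = 3 := by omega
      rcases this with e | e | e <;> rw [e]
      · exact Nat.coprime_one_left m
      · exact (Nat.coprime_two_left).2 (Nat.odd_iff.2 h2)
      · exact (Nat.Prime.coprime_iff_not_dvd Nat.prime_three).2 fun h => h3 (Nat.mod_eq_zero_of_dvd h)
    have hu := (ZMod.isUnit_iff_coprime _ m).2 hcop
    rw [Nat.cast_sub hij'.le] at hu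
    rw [← neg_sub]
    exact hu.neg
  refine Good_td (R := ZMod m) (fun i => ((i : ℕ) : ZMod m)) ?_ (ZMod.card m) hw hm4 hm hD
  intro i j hij
  rcases lt_or_gt_of_ne hij with h | h
  · exact hlt i j h
  · rw [← neg_sub]
    exact (hlt j i h).neg

/-- The recursion `u = 4 m + w`, with `m` a prime power or prime to 6, leads back to the explicit
small orders. -/
theorem Good_all (u : ℕ) (hu : 4 ≤ u) (hu6 : u ≠ 6) : Good u := by
  induction u using Nat.strong_induction_on with
  | _ u ih =>
  have hD : ∀ w < u, Extremes w := by
    intro w hw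
    by_cases h : 4 ≤ w ∧ w ≠ 6
    · exact (ih w hw h.1 h.2).extremes (by omega)
    · have : w = 0 ∨ w = 1 ∨ w = 2 ∨ w = 3 ∨ w = 6 := by omega
      rcases this with rfl | rfl | rfl | rfl | rfl
      exacts [Extremes_zero, Extremes_one, Extremes_two, Extremes_three, Extremes_six]
  have hZ : ∀ m, m % 2 = 1 → m % 3 ≠ 0 → 4 ≤ m → 4 * m ≤ u → u ≤ 5 * m → Good u := by
    intro m h2 h3 h4 hl hr
    have := Good_zmod h2 h3 (w := u - 4 * m) (by omega) h4 (ih m (by omega) h4 (by omega))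
      (hD _ (by omega))
    rwa [show 4 * m + (u - 4 * m) = u by omega] at this
  have hP : ∀ p n, p.Prime → n ≠ 0 → 4 ≤ p ^ n → p ^ n ≠ 6 → 4 * p ^ n ≤ u → u ≤ 5 * p ^ n →
      Good u := by
    intro p n hp hn h4 h6 hl hr
    have := Good_prime_pow p n hp hn (w := u - 4 * p ^ n) (by omega) h4
      (ih (p ^ n) (by omega) h4 h6) (hD _ (by omega))
    rwa [show 4 * p ^ n + (u - 4 * p ^ n) = u by omega] at this
  by_cases h : u ≤ 15
  · exact Good_base u (by interval_cases u <;> simp_all)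
  by_cases h : u ≤ 19
  · exact hP 2 2 Nat.prime_two (by omega) (by omega) (by omega) (by omega) (by omega)
  by_cases h : u ≤ 25
  · exact hZ 5 (by omega) (by omega) (by omega) (by omega) (by omega)
  by_cases h : u ≤ 27
  · exact Good_base u (by interval_cases u <;> simp)
  by_cases h : u ≤ 35
  · exact hZ 7 (by omega) (by omega) (by omega) (by omega) (by omega)
  by_cases h : u ≤ 40
  · exact hP 2 3 Nat.prime_two (by omega) (by omega) (by omega) (by omega) (by omega)
  by_cases h : u ≤ 45
  · exact hP 3 2 Nat.prime_three (by omega) (by omega) (by omega) (by omega) (by omega)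
  by_cases h : u ≤ 55
  · exact hZ 11 (by omega) (by omega) (by omega) (by omega) (by omega)
  by_cases h : u ≤ 65
  · exact hZ 13 (by omega) (by omega) (by omega) (by omega) (by omega)
  by_cases h : u ≤ 80
  · exact hP 2 4 Nat.prime_two (by omega) (by omega) (by omega) (by omega) (by omega)
  -- one of any four consecutive numbers is prime to 6
  obtain ⟨m, h1, h2, h3⟩ : ∃ m, m ≤ u / 4 ∧ u / 4 ≤ m + 3 ∧ (m % 6 = 1 ∨ m % 6 = 5) := by
    have : u / 4 % 6 < 6 := Nat.mod_lt _ (by omega)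
    by_cases h0 : u / 4 % 6 = 1 ∨ u / 4 % 6 = 5
    · exact ⟨u / 4, by omega, by omega, h0⟩
    by_cases h0 : u / 4 % 6 = 2 ∨ u / 4 % 6 = 0
    · exact ⟨u / 4 - 1, by omega, by omega, by omega⟩
    by_cases h0 : u / 4 % 6 = 3
    · exact ⟨u / 4 - 2, by omega, by omega, by omega⟩
    · exact ⟨u / 4 - 3, by omega, by omega, by omega⟩
  exact hZ m (by omega) (by omega) (by omega) (by omega) (by omega)

/-! ### Two designs differ in no or at least eight blocks -/

/-- Three pairwise disjoint sets of 4-subsets covering the same pairs, each pair at most once. -/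
structure IsTrade {α : Type} (T : Fin 3 → Finset (Finset α)) : Prop where
  card : ∀ i, ∀ b ∈ T i, b.card = 4
  uniq : ∀ i, ∀ b ∈ T i, ∀ c ∈ T i, ∀ x y, x ≠ y → x ∈ b → y ∈ b → x ∈ c → y ∈ c → b = c
  cover : ∀ i j, ∀ b ∈ T i, ∀ x ∈ b, ∀ y ∈ b, x ≠ y → ∃ c ∈ T j, x ∈ c ∧ y ∈ c
  disj : ∀ i j, i ≠ j → ∀ b ∈ T i, b ∉ T j

/-- A point of a trade lies in at least two of its blocks: otherwise the block through that point
would be the same in all three sets. -/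
theorem IsTrade.exists_other {α : Type} [DecidableEq α] {T : Fin 3 → Finset (Finset α)}
    (h : IsTrade T) {b : Finset α} (hb : b ∈ T 0) {x : α} (hx : x ∈ b) :
    ∃ c ∈ T 0, x ∈ c ∧ c ≠ b := by
  by_contra! hno
  have hb4 := h.card 0 b hb
  obtain ⟨y, hy, hyx⟩ := Finset.exists_mem_ne (show 1 < b.card by omega) x
  obtain ⟨c, hc, hxc, hyc⟩ := h.cover 0 1 b hb x hx y hy hyx.symm
  have hsub : c ⊆ b := by
    intro z hz
    by_cases hzx : z = x
    · rwa [hzx]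
    · obtain ⟨d, hd, hxd, hzd⟩ := h.cover 1 0 c hc x hxc z hz (Ne.symm hzx)
      rwa [hno d hd hxd] at hzd
  have : c = b := Finset.eq_of_subset_of_card_le hsub (by rw [h.card 1 c hc, hb4])
  exact h.disj 0 1 (by decide) b hb (this ▸ hc)

/-- If `x` lies in exactly two blocks `b` and `c` of the first set, then the two blocks through `x`
of another set arise from `b` and `c` by exchanging a point `p` of `b` and a point `q` of `c`. -/
theorem IsTrade.exchange {α : Type} [DecidableEq α] {T : Fin 3 → Finset (Finset α)}
    (h : IsTrade T) {b c : Finset α} (hb : b ∈ T 0) (hc : c ∈ T 0) (hbc : b ≠ c) {x : α}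
    (hxb : x ∈ b) (hxc : x ∈ c) (hx : ∀ d ∈ T 0, x ∈ d → d = b ∨ d = c) (j : Fin 3)
    (hj : 0 ≠ j) : ∃ p ∈ b.erase x, ∃ q ∈ c.erase x,
      insert q (b.erase p) ∈ T j ∧ insert p (c.erase q) ∈ T j := by
  have hA : (b.erase x).card = 3 := by rw [Finset.card_erase_of_mem hxb, h.card 0 b hb]
  have hB : (c.erase x).card = 3 := by rw [Finset.card_erase_of_mem hxc, h.card 0 c hc]
  set A := b.erase x with hAdef
  set B := c.erase x with hBdef
  have hbA : b = insert x A := (Finset.insert_erase hxb).symm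
  have hcB : c = insert x B := (Finset.insert_erase hxc).symm
  have hxA : x ∉ A := Finset.notMem_erase x b
  have hxB : x ∉ B := Finset.notMem_erase x c
  have hAB : Disjoint A B := by
    rw [Finset.disjoint_left]
    intro z hz hz'
    have hzx : x ≠ z := fun e => hxA (e ▸ hz)
    exact hbc (h.uniq 0 b hb c hc x z hzx hxb (Finset.mem_of_mem_erase hz) hxc
      (Finset.mem_of_mem_erase hz'))
  -- the neighbours of `x` are the same for all three sets
  have hsub : ∀ d ∈ T j, x ∈ d → d.erase x ⊆ A ∪ B := by
    intro d hd hxd z hz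
    obtain ⟨hzx, hzd⟩ := Finset.mem_erase.1 hz
    obtain ⟨e, he, hxe, hze⟩ := h.cover j 0 d hd x hxd z hzd (Ne.symm hzx)
    rcases hx e he hxe with rfl | rfl
    · exact Finset.mem_union_left _ (Finset.mem_erase.2 ⟨hzx, hze⟩)
    · exact Finset.mem_union_right _ (Finset.mem_erase.2 ⟨hzx, hze⟩)
  have hcard3 : ∀ d ∈ T j, x ∈ d → (d.erase x).card = 3 := fun d hd hxd => by
    rw [Finset.card_erase_of_mem hxd, h.card j d hd]
  have hU : (A ∪ B).card = 6 := by rw [Finset.card_union_of_disjoint hAB, hA, hB]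
  -- the complementary block
  have hcompl : ∀ d ∈ T j, x ∈ d → insert x ((A ∪ B) \ d.erase x) ∈ T j := by
    intro d hd hxd
    have h3 : ((A ∪ B) \ d.erase x).card = 3 := by
      rw [Finset.card_sdiff_of_subset (hsub d hd hxd), hU, hcard3 d hd hxd]
    obtain ⟨z, hz⟩ := Finset.card_pos.1 (show 0 < ((A ∪ B) \ d.erase x).card by omega)
    obtain ⟨hzU, hzd⟩ := Finset.mem_sdiff.1 hz
    have hzx : x ≠ z := by
      rintro rfl
      rcases Finset.mem_union.1 hzU with h | h
      · exact hxA h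
      · exact hxB h
    obtain ⟨e, he, hxe, hze⟩ : ∃ e ∈ T j, x ∈ e ∧ z ∈ e := by
      rcases Finset.mem_union.1 hzU with h' | h'
      · exact h.cover 0 j b hb x hxb z (Finset.mem_of_mem_erase h') hzx
      · exact h.cover 0 j c hc x hxc z (Finset.mem_of_mem_erase h') hzx
    have hes : e.erase x ⊆ (A ∪ B) \ d.erase x := by
      intro y hy
      refine Finset.mem_sdiff.2 ⟨hsub e he hxe hy, fun hyd => hzd ?_⟩
      have : e = d := h.uniq j e he d hd x y (Finset.ne_of_mem_erase hy).symm hxe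
        (Finset.mem_of_mem_erase hy) hxd (Finset.mem_of_mem_erase hyd)
      exact Finset.mem_erase.2 ⟨hzx.symm, this ▸ hze⟩
    rw [← Finset.eq_of_subset_of_card_le hes (by rw [h3, hcard3 e he hxe]),
      Finset.insert_erase hxe]
    exact he
  -- a pair of complementary blocks, the first one having two points in `A`
  obtain ⟨D, hD, hD', hDU, hD2⟩ : ∃ D, insert x D ∈ T j ∧ insert x ((A ∪ B) \ D) ∈ T j ∧
      D ⊆ A ∪ B ∧ (D ∩ A).card = 2 ∧ (D ∩ B).card = 1 := by
    have hsum : ∀ D ⊆ A ∪ B, (D ∩ A).card + (D ∩ B).card = D.card := by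
      intro D hD
      rw [← Finset.card_union_of_disjoint (hAB.mono Finset.inter_subset_right
        Finset.inter_subset_right), ← Finset.inter_union_distrib_left,
        Finset.inter_eq_left.2 hD]
    obtain ⟨y, hy⟩ := Finset.card_pos.1 (show 0 < A.card by omega)
    obtain ⟨d, hd, hxd, hyd⟩ := h.cover 0 j b hb x hxb y (Finset.mem_of_mem_erase hy)
      (Finset.ne_of_mem_erase hy).symm
    have hD := hsub d hd hxd
    have h1 := hsum _ hD
    rw [hcard3 d hd hxd] at h1
    have hc' := hcompl d hd hxd
    have hd' : insert x (d.erase x) ∈ T j := by rwa [Finset.insert_erase hxd]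
    have hpos : 0 < (d.erase x ∩ A).card := Finset.card_pos.2
      ⟨y, Finset.mem_inter.2 ⟨Finset.mem_erase.2 ⟨(Finset.ne_of_mem_erase hy), hyd⟩, hy⟩⟩
    have hlt : (d.erase x ∩ A).card ≠ 3 := by
      intro h3
      have e1 : d.erase x ∩ A = A :=
        Finset.eq_of_subset_of_card_le Finset.inter_subset_right (by omega)
      have e2 : d.erase x ∩ A = d.erase x :=
        Finset.eq_of_subset_of_card_le Finset.inter_subset_left (by rw [h3, hcard3 d hd hxd])
      rw [← e2, e1, ← hbA] at hd'
      exact h.disj 0 j hj b hb hd'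
    have : (d.erase x ∩ A).card = 1 ∨ (d.erase x ∩ A).card = 2 := by omega
    rcases this with h2 | h2
    · have hsA : ((A ∪ B) \ d.erase x) ∩ A = A \ (d.erase x ∩ A) := by
        ext z; simp only [Finset.mem_inter, Finset.mem_sdiff, Finset.mem_union]; tauto
      have hsB : ((A ∪ B) \ d.erase x) ∩ B = B \ (d.erase x ∩ B) := by
        ext z; simp only [Finset.mem_inter, Finset.mem_sdiff, Finset.mem_union]; tauto
      refine ⟨(A ∪ B) \ d.erase x, hc', ?_, Finset.sdiff_subset, ?_, ?_⟩
      · rwa [Finset.sdiff_sdiff_eq_self hD]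
      · rw [hsA, Finset.card_sdiff_of_subset Finset.inter_subset_right]; omega
      · rw [hsB, Finset.card_sdiff_of_subset Finset.inter_subset_right]; omega
    · exact ⟨d.erase x, hd', hc', hD, h2, by omega⟩
  have hAD : (A \ D).card = 1 := by
    have := Finset.card_sdiff_add_card_inter A D
    rw [Finset.inter_comm] at this
    omega
  obtain ⟨p, hp⟩ := Finset.card_eq_one.1 hAD
  obtain ⟨q, hq⟩ := Finset.card_eq_one.1 hD2.2
  have hp' : ∀ z, (z ∈ A ∧ z ∉ D) ↔ z = p := fun z => by
    rw [← Finset.mem_sdiff, hp, Finset.mem_singleton]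
  have hq' : ∀ z, (z ∈ D ∧ z ∈ B) ↔ z = q := fun z => by
    rw [← Finset.mem_inter, hq, Finset.mem_singleton]
  have hpA := ((hp' p).2 rfl).1
  have hqB := ((hq' q).2 rfl).2
  have hxp : x ≠ p := fun e => hxA (e ▸ hpA)
  have hxq : x ≠ q := fun e => hxB (e ▸ hqB)
  have hdis : ∀ z, z ∈ A → z ∉ B := fun z hz => Finset.disjoint_left.1 hAB hz
  have hDU' : ∀ z, z ∈ D → z ∈ A ∨ z ∈ B := fun z hz => Finset.mem_union.1 (hDU hz)
  refine ⟨p, hpA, q, hqB, ?_, ?_⟩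
  · have : insert q (b.erase p) = insert x D := by
      rw [hbA]
      ext z
      have := hp' z; have := hq' z; have := hdis z; have := hDU' z
      simp only [Finset.mem_insert, Finset.mem_erase]
      grind
    rwa [this]
  · have : insert p (c.erase q) = insert x ((A ∪ B) \ D) := by
      rw [hcB]
      ext z
      have := hp' z; have := hq' z; have := hdis z; have := hDU' z
      simp only [Finset.mem_insert, Finset.mem_erase, Finset.mem_sdiff, Finset.mem_union]
      grind
    rwa [this]

/-- In a 3 by 3 grid, two different crosses without their centres have at least 6 cells in their
union. -/
theorem six_le_crosses : ∀ p p' q q' : Fin 3, p ≠ p' ∨ q ≠ q' →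
    6 ≤ (Finset.univ.filter fun z : Fin 3 × Fin 3 => ((z.1 ≠ p ∧ z.2 = q) ∨ (z.1 = p ∧ z.2 ≠ q)) ∨
      ((z.1 ≠ p' ∧ z.2 = q') ∨ (z.1 = p' ∧ z.2 ≠ q'))).card := by
  decide

theorem IsTrade.eight_le_of_two {α : Type} [DecidableEq α] {T : Fin 3 → Finset (Finset α)}
    (h : IsTrade T) {b c : Finset α} (hb : b ∈ T 0) (hc : c ∈ T 0) (hbc : b ≠ c) {x : α}
    (hxb : x ∈ b) (hxc : x ∈ c) (hx : ∀ d ∈ T 0, x ∈ d → d = b ∨ d = c) :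
    8 ≤ (T 0).card := by
  obtain ⟨p, hp, q, hq, h1, h1'⟩ := h.exchange hb hc hbc hxb hxc hx 1 (by decide)
  obtain ⟨p', hp', q', hq', h2, h2'⟩ := h.exchange hb hc hbc hxb hxc hx 2 (by decide)
  have hA : (b.erase x).card = 3 := by rw [Finset.card_erase_of_mem hxb, h.card 0 b hb]
  have hB : (c.erase x).card = 3 := by rw [Finset.card_erase_of_mem hxc, h.card 0 c hc]
  have hne : p ≠ p' ∨ q ≠ q' := by
    by_contra! he
    obtain ⟨rfl, rfl⟩ := he
    exact h.disj 1 2 (by decide) _ h1 h2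
  have hdisj : ∀ y ∈ b.erase x, y ∉ c := by
    intro y hy hyc
    obtain ⟨hyx, hyb⟩ := Finset.mem_erase.1 hy
    exact hbc (h.uniq 0 b hb c hc x y (Ne.symm hyx) hxb hyb hxc hyc)
  -- a pair joining the two blocks that is covered by the exchanged blocks is covered by `T 0`
  have hcross : ∀ j p q, p ∈ b.erase x → q ∈ c.erase x → insert q (b.erase p) ∈ T j →
      insert p (c.erase q) ∈ T j → ∀ y ∈ b.erase x, ∀ z ∈ c.erase x,
      ((y ≠ p ∧ z = q) ∨ (y = p ∧ z ≠ q)) → ∃ d ∈ T 0, y ∈ d ∧ z ∈ d := by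
    intro j p q hp hq h1 h2 y hy z hz hyz
    have hne : y ≠ z := fun e => hdisj y hy (e ▸ Finset.mem_of_mem_erase hz)
    rcases hyz with ⟨hyp, rfl⟩ | ⟨rfl, hzq⟩
    · exact h.cover j 0 _ h1 y (Finset.mem_insert_of_mem
        (Finset.mem_erase.2 ⟨hyp, Finset.mem_of_mem_erase hy⟩)) z (Finset.mem_insert_self _ _) hne
    · exact h.cover j 0 _ h2 y (Finset.mem_insert_self _ _) z (Finset.mem_insert_of_mem
        (Finset.mem_erase.2 ⟨hzq, Finset.mem_of_mem_erase hz⟩)) hne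
  let eA : Fin 3 ≃ b.erase x := (Finset.equivFinOfCardEq hA).symm
  let eB : Fin 3 ≃ c.erase x := (Finset.equivFinOfCardEq hB).symm
  let S := Finset.univ.filter fun z : Fin 3 × Fin 3 =>
    ((z.1 ≠ eA.symm ⟨p, hp⟩ ∧ z.2 = eB.symm ⟨q, hq⟩) ∨
      (z.1 = eA.symm ⟨p, hp⟩ ∧ z.2 ≠ eB.symm ⟨q, hq⟩)) ∨
    ((z.1 ≠ eA.symm ⟨p', hp'⟩ ∧ z.2 = eB.symm ⟨q', hq'⟩) ∨
      (z.1 = eA.symm ⟨p', hp'⟩ ∧ z.2 ≠ eB.symm ⟨q', hq'⟩))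
  have h6 : 6 ≤ S.card := six_le_crosses (eA.symm ⟨p, hp⟩) (eA.symm ⟨p', hp'⟩)
    (eB.symm ⟨q, hq⟩) (eB.symm ⟨q', hq'⟩) (by simpa using hne)
  have hcov : ∀ z, ∃ d, z ∈ S → d ∈ T 0 ∧ (eA z.1).1 ∈ d ∧ (eB z.2).1 ∈ d := by
    intro z
    by_cases hz : ∃ d ∈ T 0, (eA z.1).1 ∈ d ∧ (eB z.2).1 ∈ d
    · obtain ⟨d, hd⟩ := hz
      exact ⟨d, fun _ => hd⟩
    · refine ⟨∅, fun hz' => absurd ?_ hz⟩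
      simp only [S, Finset.mem_filter, Finset.mem_univ, true_and, Equiv.eq_symm_apply, ne_eq,
        Subtype.ext_iff] at hz'
      rcases hz' with hz' | hz'
      · exact hcross 1 p q hp hq h1 h1' _ (eA z.1).2 _ (eB z.2).2 hz'
      · exact hcross 2 p' q' hp' hq' h2 h2' _ (eA z.1).2 _ (eB z.2).2 hz'
  choose f hf using hcov
  have hfb : ∀ z ∈ S, f z ≠ b := fun z hz e => by
    obtain ⟨hzx, hzc⟩ := Finset.mem_erase.1 (eB z.2).2
    exact hdisj _ (Finset.mem_erase.2 ⟨hzx, e ▸ (hf z hz).2.2⟩) hzc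
  have hfc : ∀ z ∈ S, f z ≠ c := fun z hz e => hdisj _ (eA z.1).2 (e ▸ (hf z hz).2.1)
  have hle : S.card ≤ (((T 0).erase b).erase c).card := by
    refine Finset.card_le_card_of_injOn f ?_ ?_
    · intro z hz
      exact Finset.mem_erase.2 ⟨hfc z hz, Finset.mem_erase.2 ⟨hfb z hz, (hf z hz).1⟩⟩
    · intro z hz z' hz' he
      have hz := Finset.mem_coe.1 hz
      have hz' := Finset.mem_coe.1 hz'
      obtain ⟨hd, hy, hw⟩ := hf z hz
      obtain ⟨-, hy', hw'⟩ := hf z' hz'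
      rw [← he] at hy' hw'
      have e1 : (eA z.1).1 = (eA z'.1).1 := by
        by_contra hne
        exact hfb z hz (h.uniq 0 _ hd b hb _ _ hne hy hy' (Finset.mem_of_mem_erase (eA z.1).2)
          (Finset.mem_of_mem_erase (eA z'.1).2))
      have e2 : (eB z.2).1 = (eB z'.2).1 := by
        by_contra hne
        exact hfc z hz (h.uniq 0 _ hd c hc _ _ hne hw hw' (Finset.mem_of_mem_erase (eB z.2).2)
          (Finset.mem_of_mem_erase (eB z'.2).2))
      exact Prod.ext (eA.injective (Subtype.ext e1)) (eB.injective (Subtype.ext e2))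
  rw [Finset.card_erase_of_mem (Finset.mem_erase.2 ⟨hbc.symm, hc⟩),
    Finset.card_erase_of_mem hb] at hle
  omega

/-- A nonempty trade has at least eight blocks: either some point lies in only two blocks, or each
of the four points of a block lies in two further ones. -/
theorem IsTrade.eight_le {α : Type} [DecidableEq α] {T : Fin 3 → Finset (Finset α)}
    (h : IsTrade T) (hne : (T 0).Nonempty) : 8 ≤ (T 0).card := by
  obtain ⟨b, hb⟩ := hne
  by_cases hall : ∀ x ∈ b, 2 ≤ (((T 0).filter fun d => x ∈ d).erase b).card
  · have hsub : (b.biUnion fun x => ((T 0).filter fun d => x ∈ d).erase b) ⊆ T 0 := by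
      intro d hd
      obtain ⟨x, -, hd⟩ := Finset.mem_biUnion.1 hd
      exact (Finset.mem_filter.1 (Finset.mem_of_mem_erase hd)).1
    have hcard := Finset.card_le_card hsub
    rw [Finset.card_biUnion] at hcard
    · have := Finset.sum_le_sum hall
      rw [Finset.sum_const, h.card 0 b hb, smul_eq_mul] at this
      omega
    · intro x hx y hy hxy
      rw [Function.onFun, Finset.disjoint_left]
      intro d hd hd'
      obtain ⟨hdb, hd⟩ := Finset.mem_erase.1 hd
      obtain ⟨hdT, hxd⟩ := Finset.mem_filter.1 hd
      have hyd := (Finset.mem_filter.1 (Finset.mem_of_mem_erase hd')).2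
      exact hdb (h.uniq 0 d hdT b hb x y hxy hxd hyd hx hy)
  · push Not at hall
    obtain ⟨x, hx, hlt⟩ := hall
    obtain ⟨c, hc, hxc, hcb⟩ := h.exists_other hb hx
    refine h.eight_le_of_two hb hc hcb.symm hx hxc ?_
    intro d hd hxd
    by_cases hdb : d = b
    · exact Or.inl hdb
    · refine Or.inr (Finset.card_le_one.1 (Nat.lt_succ_iff.1 hlt) d ?_ c ?_)
      · exact Finset.mem_erase.2 ⟨hdb, Finset.mem_filter.2 ⟨hd, hxd⟩⟩
      · exact Finset.mem_erase.2 ⟨hcb, Finset.mem_filter.2 ⟨hc, hxc⟩⟩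

theorem IsDec.card_eq {v : ℕ} {B : Finset (Finset (Fin v))}
    (h : IsDec (⊤ : SimpleGraph (Fin v)) B) : 12 * B.card = v * (v - 1) := by
  have hU : B.biUnion Finset.offDiag = (Finset.univ : Finset (Fin v)).offDiag := by
    ext ⟨x, y⟩
    simp only [Finset.mem_biUnion, Finset.mem_offDiag, Finset.mem_univ, true_and]
    constructor
    · rintro ⟨b, -, -, -, hxy⟩
      exact hxy
    · intro hxy
      obtain ⟨b, ⟨hb, hx, hy⟩, -⟩ := h.uniq x y hxy
      exact ⟨b, hb, hx, hy, hxy⟩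
  have hc := congrArg Finset.card hU
  rw [Finset.card_biUnion] at hc
  · rw [Finset.sum_congr rfl fun b hb => by rw [Finset.offDiag_card, h.card b hb],
      Finset.sum_const, Finset.offDiag_card, Finset.card_univ, Fintype.card_fin, smul_eq_mul] at hc
    rw [Nat.mul_sub_one, ← hc]
    ring
  · intro b hb c hc hbc
    rw [Function.onFun, Finset.disjoint_left]
    rintro ⟨x, y⟩ h1 h2
    rw [Finset.mem_offDiag] at h1 h2
    exact hbc ((h.uniq x y h1.2.2).unique ⟨hb, h1.1, h1.2.1⟩ ⟨hc, h2.1, h2.2.1⟩)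

theorem J_upper {v k N : ℕ} (hk : k ∈ J v) (hN : v * (v - 1) = 12 * N) : k + 8 ≤ N ∨ k = N := by
  obtain ⟨B, C, hB, hC, rfl⟩ := hk
  have hCB : ∀ i, C ⊆ B i := by
    intro i b hb
    have hne : i ≠ i + 1 := by fin_cases i <;> decide
    exact ((hC i (i + 1) hne b).2 hb).1
  have hT : IsTrade fun i => B i \ C := by
    refine ⟨?_, ?_, ?_, ?_⟩
    · intro i b hb
      exact (hB i).card b (Finset.mem_sdiff.1 hb).1
    · intro i b hb c hc x y hxy hxb hyb hxc hyc
      exact ((hB i).uniq x y hxy).unique ⟨(Finset.mem_sdiff.1 hb).1, hxb, hyb⟩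
        ⟨(Finset.mem_sdiff.1 hc).1, hxc, hyc⟩
    · intro i j b hb x hx y hy hxy
      obtain ⟨hb, hbC⟩ := Finset.mem_sdiff.1 hb
      obtain ⟨c, ⟨hc, hxc, hyc⟩, -⟩ := (hB j).uniq x y hxy
      refine ⟨c, Finset.mem_sdiff.2 ⟨hc, fun hcC => hbC ?_⟩, hxc, hyc⟩
      rwa [((hB i).uniq x y hxy).unique ⟨hb, hx, hy⟩ ⟨hCB i hcC, hxc, hyc⟩]
    · intro i j hij b hb hb'
      exact (Finset.mem_sdiff.1 hb).2 ((hC i j hij b).1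
        ⟨(Finset.mem_sdiff.1 hb).1, (Finset.mem_sdiff.1 hb').1⟩)
  have hcard := (hB 0).card_eq
  have hsub := Finset.card_sdiff_add_card_eq_card (hCB 0)
  by_cases hne : (B 0 \ C).Nonempty
  · have : 8 ≤ (B 0 \ C).card := hT.eight_le hne
    omega
  · rw [Finset.not_nonempty_iff_eq_empty] at hne
    rw [hne, Finset.card_empty] at hsub
    omega

/-! ### The theorem -/

theorem J3_eq_J (v : ℕ) : J3 v = J v := by
  have hiff : ∀ B : Finset (Finset (Fin v)), IsS24 Finset.univ B ↔ IsDec ⊤ B := by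
    intro B
    constructor
    · intro h
      exact ⟨⟨fun _ _ _ _ _ _ hxy => hxy, fun x y hxy =>
        h.2 x y (Finset.mem_univ x) (Finset.mem_univ y) hxy⟩, fun b hb => (h.1 b hb).2⟩
    · intro h
      exact ⟨fun b hb => ⟨Finset.subset_univ b, h.card b hb⟩, fun x y _ _ hxy => h.uniq x y hxy⟩
  ext k
  constructor
  · rintro ⟨B1, B2, B3, h1, h2, h3, ⟨h12, h23⟩, rfl⟩
    have m12 : ∀ b, (b ∈ B1 ∧ b ∈ B2) ↔ (b ∈ B1 ∧ b ∈ B3) := fun b => by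
      rw [← Finset.mem_inter, h12, Finset.mem_inter]
    have m23 : ∀ b, (b ∈ B1 ∧ b ∈ B2) ↔ (b ∈ B2 ∧ b ∈ B3) := fun b => by
      rw [← Finset.mem_inter, h23, Finset.mem_inter]
    refine ⟨![B1, B2, B3], B1 ∩ B2 ∩ B3, ?_, ?_, rfl⟩
    · intro i
      fin_cases i
      exacts [(hiff _).1 h1, (hiff _).1 h2, (hiff _).1 h3]
    · intro i j hij b
      have e12 := m12 b
      have e23 := m23 b
      rw [Finset.mem_inter, Finset.mem_inter]
      clear h12 h23 m12 m23
      fin_cases i <;> fin_cases j <;> first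
        | exact absurd rfl hij
        | (simp only [Fin.zero_eta, Fin.mk_one, Fin.reduceFinMk, Matrix.cons_val]; tauto)
  · rintro ⟨B, C, hB, hC, rfl⟩
    have hI : ∀ i j, i ≠ j → B i ∩ B j = C := fun i j hij => by
      ext b
      rw [Finset.mem_inter, hC i j hij b]
    have h01 := hI 0 1 (by decide)
    have h02 := hI 0 2 (by decide)
    have h12 := hI 1 2 (by decide)
    refine ⟨B 0, B 1, B 2, (hiff _).2 (hB 0), (hiff _).2 (hB 1), (hiff _).2 (hB 2),
      ⟨h01.trans h02.symm, h01.trans h12.symm⟩, ?_⟩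
    rw [Finset.inter_assoc, h12, ← h01, ← Finset.inter_assoc, Finset.inter_self]

/-- for every positive `u ≡ 2, 3 (mod 4)` with `u ≥ 7`,
`J_3[12u+1] = I_3[12u+1]`. -/
theorem stmt15 (u : ℕ) (hu : 0 < u) (hmod : u % 4 = 2 ∨ u % 4 = 3) (h7 : 7 ≤ u) :
    J3 (12 * u + 1) = I3 (12 * u + 1) := by
  have hN : (12 * u + 1) * (12 * u + 1 - 1) = 12 * (u * (12 * u + 1)) := by
    rw [Nat.add_sub_cancel]
    ring
  have hb : steinerBlockCount (12 * u + 1) = u * (12 * u + 1) := by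
    rw [steinerBlockCount, hN, Nat.mul_div_cancel_left _ (by omega)]
  have hbig : 8 ≤ u * (12 * u + 1) := by nlinarith
  rw [J3_eq_J]
  ext k
  have hI : k ∈ I3 (12 * u + 1) ↔ k + 8 ≤ u * (12 * u + 1) ∨ k = u * (12 * u + 1) := by
    simp only [I3, hb, Set.mem_sdiff, Set.mem_ofPred_eq, Set.mem_insert_iff,
      Set.mem_singleton_iff]
    omega
  rw [hI]
  exact ⟨fun hk => J_upper hk hN, fun hk => Good_all u (by omega) (by omega) k hk⟩
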